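/- arXiv:2306.09556 — 2 statements merged into one kernel-verified Lean document; each statement's English description precedes it below -/
import Mathlib

section
/- Let A ∈ GL_N(C((t))). Then there exist a column transformation matrix C ∈ GL_N(C[[t]]), a matrix U ∈ U⁻_{M,N}(C((t))), integers θ'_1, ..., θ'_{N-M-1}, g, g' ∈ GL_M(C[[t]]) and h ∈ GL_{M+1}(C[[t]]) such that (g ⋉ U) · A · C equals a matrix of the form L_{(λ,(θ,θ'))} up to the block GL_M(O) × GL_{M+1}(O) action; i.e., every double coset (GL_M(O) ⋉ U⁻_{M,N}(F)) \ GL_N(F) / GL_N(O) has a representative L_{(λ,(θ,θ'))} with (λ,θ) dominant of length (M, M+1). -/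
/- Common setup: `F = ℂ((t))` the field of formal Laurent series, `O = ℂ[[t]]` its ring of
integers (elements with no negative coefficients), `tpow k = t^k`.  `InGLO A` says that the
square matrix `A` lies in `GL(O)`, i.e. both `A` and an inverse of `A` have entries in `O`. -/

noncomputable section

abbrev F : Type := LaurentSeries ℂ

/-- `t^k` for `k : ℤ`, where `t` is the uniformizer of `ℂ((t))`. -/
noncomputable def tpow (k : ℤ) : F := (HahnSeries.single (1 : ℤ) (1 : ℂ) : F) ^ k

/-- The ring of integers `O = ℂ[[t]] ⊆ ℂ((t))`. -/
def Oint : Set F := {f : F | ∀ m : ℤ, m < 0 → f.coeff m = 0}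

/-- `A ∈ GL_n(O)`. -/
def InGLO {n : ℕ} (A : Matrix (Fin n) (Fin n) F) : Prop :=
  ∃ B : Matrix (Fin n) (Fin n) F,
    (∀ i j, A i j ∈ Oint) ∧ (∀ i j, B i j ∈ Oint) ∧ A * B = 1 ∧ B * A = 1

/-- Block-diagonal embedding of an `M×M` matrix into the top-left corner of an `n×n`
matrix, with `1`'s on the rest of the diagonal. -/
noncomputable def embTop (M n : ℕ) (g : Matrix (Fin M) (Fin M) F) :
    Matrix (Fin n) (Fin n) F := fun i j =>
  if hi : (i : ℕ) < M then
    (if hj : (j : ℕ) < M then g ⟨i, hi⟩ ⟨j, hj⟩ else 0)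
  else (if (i : ℕ) = (j : ℕ) then 1 else 0)

/-- `u ∈ U⁻_{M,N}(F)`, the unipotent radical of the negative parabolic of type
`(M+1,1,…,1)` in `GL_N`: identity diagonal, and (0-based) the only nonzero off-diagonal
entries are in rows `i ≥ M+1` and columns `j < i`. -/
def InUminus (M : ℕ) {n : ℕ} (u : Matrix (Fin n) (Fin n) F) : Prop :=
  (∀ i, u i i = 1) ∧
  ∀ i j : Fin n, i ≠ j → ((i : ℕ) ≤ M ∨ (i : ℕ) ≤ (j : ℕ)) → u i j = 0

/-- The representative `L_{(λ,(θ,θ'))} ∈ GL_N(F)`, `N = M+1+K`: the upper-left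
`(M+1)×(M+1)` block has diagonal `t^{λ_i+θ_i}` (`i ≤ M`) and last row
`(t^{θ_1},…,t^{θ_{M+1}})`, and the lower-right block is `diag(t^{θ'_1},…,t^{θ'_K})`. -/
noncomputable def LmatN (M K : ℕ) (lam : Fin M → ℤ) (th : Fin (M + 1) → ℤ)
    (th' : Fin K → ℤ) : Matrix (Fin (M + 1 + K)) (Fin (M + 1 + K)) F := fun i j =>
  if hi : (i : ℕ) < M then
    (if (i : ℕ) = (j : ℕ) then tpow (lam ⟨i, hi⟩ + th ⟨i, by omega⟩) else 0)
  else if hi2 : (i : ℕ) = M then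
    (if hj : (j : ℕ) < M + 1 then tpow (th ⟨j, hj⟩) else 0)
  else if (i : ℕ) = (j : ℕ) then
    tpow (th' ⟨(i : ℕ) - (M + 1), by have := i.isLt; omega⟩)
  else 0

/-! Column operations over `O` make `A` lower triangular with powers of `t` on the diagonal, and
`U⁻_{M,N}(F)` then clears everything off the diagonal below row `M + 1`. In the remaining block of
size `M + 1`, Smith form turns the upper left `M × M` block into `diag(t^{a_i})` with `a`
increasing, and unit scalings together with the corner entry `t^c` turn the last row into powers
`t^{θ_i}` with `θ_i ≤ c`.

To reach a dominant pair, replace `θ` by `θ'_j = min_i (θ_i + max(0, a_j - a_i))`. If the minimum is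
attained at `i = f(j)`, adding a multiple of column `f(j)` to column `j` produces the entry
`t^{θ'_j}`, and the bound `a_j - a_{f(j)} ≤ max(0, a_j - a_{f(j)})` is what allows an integral row
operation to restore the diagonal block. By the triangle inequality for `max(0, a_j - a_i)`, one may
take `θ'_{f(j)} = θ_{f(j)}`, so that these operations are of the form `1 + N` with `N² = 0`. The
inequality `θ'_j ≤ θ'_i + max(0, a_j - a_i)` says exactly that `θ'` and `a - θ'` are increasing. -/

open Matrix

theorem exists_isUnit_mul_mul_eq_diagonal {R ι : Type*} [CommRing R] [IsDomain R]
    [IsPrincipalIdealRing R] [Fintype ι] [DecidableEq ι] (A : Matrix ι ι R) (hA : A.det ≠ 0) :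
    ∃ (P Q : Matrix ι ι R) (a : ι → R), IsUnit P ∧ IsUnit Q ∧ P * A * Q = diagonal a := by
  have hinj : Function.Injective (toLin' A) := mulVec_injective_of_det_ne_zero hA
  let f := LinearEquiv.ofInjective (toLin' A) hinj
  let std : Module.Basis ι R (ι → R) := Pi.basisFun R ι
  obtain ⟨b, a, b', hb⟩ := Submodule.exists_smith_normal_form_of_rank_eq std f.symm.finrank_eq
  let c := b'.map f.symm
  have hAc (j : ι) : toLin' A (c j) = a j • b j := by
    rw [← hb, ← LinearEquiv.ofInjective_apply (h := hinj)]
    simp [c, f]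
  refine ⟨b.toMatrix std, std.toMatrix c, a,
    .of_mul_eq_one _ (b.toMatrix_mul_toMatrix_flip std),
    .of_mul_eq_one _ (std.toMatrix_mul_toMatrix_flip c), ?_⟩
  calc b.toMatrix std * A * std.toMatrix c
      = b.toMatrix std * LinearMap.toMatrix std std (toLin' A) * std.toMatrix c := by
        rw [LinearMap.toMatrix_eq_toMatrix', LinearMap.toMatrix'_toLin']
    _ = LinearMap.toMatrix c b (toLin' A) :=
        basis_toMatrix_mul_linearMap_toMatrix_mul_basis_toMatrix ..
    _ = diagonal a := by
        ext i j
        rcases eq_or_ne i j with rfl | hij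
        · simp [LinearMap.toMatrix_apply, hAc]
        · simp [LinearMap.toMatrix_apply, hAc, hij]

theorem det_map_ne_zero_of_isUnit {R K ι : Type*} [CommRing R] [Field K] [Algebra R K] [Fintype ι]
    [DecidableEq ι] {C : Matrix ι ι R} (hC : IsUnit C) : (C.map (algebraMap R K)).det ≠ 0 :=
  ((isUnit_iff_isUnit_det _).1 (hC.map (algebraMap R K).mapMatrix)).ne_zero

theorem exists_isUnit_map_mul_mul_map_eq_diagonal (R : Type*) {K ι : Type*} [CommRing R]
    [IsDomain R] [IsPrincipalIdealRing R] [Field K] [Algebra R K] [IsFractionRing R K] [Fintype ι]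
    [DecidableEq ι] (A : Matrix ι ι K) (hA : A.det ≠ 0) :
    ∃ (P Q : Matrix ι ι R) (d : ι → K), IsUnit P ∧ IsUnit Q ∧
      P.map (algebraMap R K) * A * Q.map (algebraMap R K) = diagonal d := by
  obtain ⟨b, hb⟩ := IsLocalization.exist_integer_multiples_of_finite (nonZeroDivisors R)
    fun p : ι × ι => A p.1 p.2
  have hb₀ : algebraMap R K b ≠ 0 := IsFractionRing.to_map_ne_zero_of_mem_nonZeroDivisors b.2
  choose B hB using hb
  let B' : Matrix ι ι R := of fun i j => B (i, j)
  have hB' : B'.map (algebraMap R K) = algebraMap R K b • A := by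
    ext i j
    simp [B', hB, Algebra.smul_def]
  have hdet : B'.det ≠ 0 := by
    have h : (B'.map (algebraMap R K)).det ≠ 0 := by simp [hB', hA]
    exact fun h₀ => h <| by
      rw [← RingHom.mapMatrix_apply, ← RingHom.map_det, h₀, map_zero]
  obtain ⟨P, Q, a, hP, hQ, hPQ⟩ := exists_isUnit_mul_mul_eq_diagonal B' hdet
  refine ⟨P, Q, fun i => (algebraMap R K b)⁻¹ * algebraMap R K (a i), hP, hQ, ?_⟩
  calc P.map (algebraMap R K) * A * Q.map (algebraMap R K)
      = (algebraMap R K b)⁻¹ • (P * B' * Q).map (algebraMap R K) := by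
        rw [Matrix.map_mul, Matrix.map_mul, hB', Matrix.mul_smul, Matrix.smul_mul,
          inv_smul_smul₀ hb₀]
    _ = diagonal fun i => (algebraMap R K b)⁻¹ * algebraMap R K (a i) := by
        rw [hPQ, diagonal_map (map_zero _), ← diagonal_smul]
        rfl

theorem exists_isUnit_vecMul_eq_single (R : Type*) {K ι : Type*} [CommRing R] [IsDomain R]
    [ValuationRing R] [Field K] [Algebra R K] [IsFractionRing R K] [Fintype ι] [DecidableEq ι]
    (v : ι → K) (i : ι) :
    ∃ (C : Matrix ι ι R) (x : K), IsUnit C ∧ v ᵥ* C.map (algebraMap R K) = Pi.single i x := by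
  have : Nonempty ι := ⟨i⟩
  obtain ⟨j, hj⟩ := Finite.exists_max fun k => ValuationRing.valuation R K (v k)
  have hdvd (k : ι) : ∃ r : R, v j * algebraMap R K r = v k := by
    rcases eq_or_ne (v j) 0 with h0 | h0
    · have hk : v k = 0 := by simpa [h0] using hj k
      exact ⟨0, by rw [h0, hk, zero_mul]⟩
    · obtain ⟨r, hr⟩ := (ValuationRing.mem_integer_iff R K (v k / v j)).1 <| by
        rw [Valuation.mem_integer_iff, map_div₀]
        exact div_le_one_of_le₀ (hj k) zero_le
      exact ⟨r, by rw [hr, mul_div_cancel₀ _ h0]⟩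
  choose r hr using hdvd
  let s : ι → R := Function.update r j 0
  let E : Matrix ι ι R := 1 - vecMulVec (Pi.single j 1) s
  have hE : IsUnit E :=
    IsNilpotent.isUnit_one_sub ⟨2, by simp [pow_two, vecMulVec_mul_vecMulVec, s]⟩
  have hvE : v ᵥ* E.map (algebraMap R K) = Pi.single j (v j) := by
    have hmap : E.map (algebraMap R K) = 1 - vecMulVec (Pi.single j 1) (algebraMap R K ∘ s) := by
      ext k l
      simp [E, vecMulVec_apply, Pi.single_apply, one_apply, apply_ite (algebraMap R K)]
    rw [hmap, vecMul_sub, vecMul_one, vecMul_vecMulVec, dotProduct_single_one]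
    ext k
    rcases eq_or_ne k j with rfl | hk
    · simp [s]
    · simp [s, hk, hr]
  refine ⟨E.submatrix (Equiv.refl ι) (Equiv.swap i j), v j, (isUnit_submatrix_equiv _ _).2 hE, ?_⟩
  calc v ᵥ* (E.submatrix (Equiv.refl ι) (Equiv.swap i j)).map (algebraMap R K)
      = (v ᵥ* E.map (algebraMap R K)) ∘ Equiv.swap i j := rfl
    _ = Pi.single i (v j) := by
      rw [hvE]
      ext k
      simp [Pi.single_apply, Equiv.swap_apply_eq_iff]

theorem exists_isUnit_isLowerTriangular_mul (R : Type*) {K : Type*} [CommRing R] [IsDomain R]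
    [ValuationRing R] [Field K] [Algebra R K] [IsFractionRing R K] :
    ∀ {n : ℕ} (A : Matrix (Fin n) (Fin n) K), ∃ C : Matrix (Fin n) (Fin n) R,
      IsUnit C ∧ (A * C.map (algebraMap R K)).IsLowerTriangular
  | 0, _ => ⟨1, isUnit_one, fun i => i.elim0⟩
  | n + 1, A => by
    obtain ⟨C₁, x, hC₁, hrow⟩ := exists_isUnit_vecMul_eq_single R (A 0) 0
    let B := A * C₁.map (algebraMap R K)
    have hB (j : Fin n) : B 0 j.succ = 0 := (congrFun hrow j.succ).trans (by simp)
    obtain ⟨C₂, hC₂, hlower⟩ :=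
      exists_isUnit_isLowerTriangular_mul R (B.submatrix Fin.succ Fin.succ)
    let e : Fin (n + 1) ≃ Fin n ⊕ Unit := (finSuccEquiv n).trans (Equiv.optionEquivSumPUnit _)
    let C₃ : Matrix (Fin (n + 1)) (Fin (n + 1)) R := (fromBlocks C₂ 0 0 1).submatrix e e
    have hC₃ : IsUnit C₃ :=
      (isUnit_submatrix_equiv e e).2 (isUnit_fromBlocks_zero₂₁.2 ⟨hC₂, isUnit_one⟩)
    have hcol₀ (j : Fin n) : C₃ 0 j.succ = 0 := by simp [C₃, e]
    have hcol (i j : Fin n) : C₃ i.succ j.succ = C₂ i j := by simp [C₃, e]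
    have hBC (i : Fin (n + 1)) (j : Fin n) :
        (B * C₃.map (algebraMap R K)) i j.succ =
          ∑ k, B i k.succ * algebraMap R K (C₂ k j) := by
      simp [mul_apply, Fin.sum_univ_succ, hcol₀, hcol]
    refine ⟨C₁ * C₃, hC₁.mul hC₃, ?_⟩
    rw [Matrix.map_mul, ← Matrix.mul_assoc]
    intro i j (hij : i < j)
    obtain ⟨j, rfl⟩ := Fin.exists_succ_eq.2 (Fin.ne_zero_of_lt hij)
    rw [hBC]
    cases i using Fin.cases with
    | zero => simp [hB]
    | succ i => exact hlower (Fin.succ_lt_succ_iff.1 hij)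

theorem exists_algebraMap_eq_zpow {R K : Type*} [CommRing R] [Field K] [Algebra R K] (ϖ : R)
    {n : ℤ} (hn : 0 ≤ n) : ∃ r : R, algebraMap R K r = algebraMap R K ϖ ^ n := by
  lift n to ℕ using hn
  exact ⟨ϖ ^ n, by simp⟩

section IsDiscreteValuationRing

variable {R K : Type*} [CommRing R] [IsDomain R] [IsDiscreteValuationRing R]
  [Field K] [Algebra R K] [IsFractionRing R K] {ϖ : R}

open IsDiscreteValuationRing

theorem exists_mul_unit_eq_zpow (hϖ : Irreducible ϖ) {x : K} (hx : x ≠ 0) :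
    ∃ (n : ℤ) (u : Rˣ), x * algebraMap R K u = algebraMap R K ϖ ^ n := by
  obtain ⟨n, u, rfl⟩ := exists_units_eq_smul_zpow_of_irreducible hϖ hx
  refine ⟨n, u⁻¹, ?_⟩
  rw [Units.smul_def, Algebra.smul_def, mul_right_comm, ← map_mul, Units.mul_inv, map_one, one_mul]

theorem exists_mul_unit_add_mul_eq_zpow (hϖ : Irreducible ϖ) (w : K) (c : ℤ) :
    ∃ n ≤ c, ∃ (e : Rˣ) (z : R),
      w * algebraMap R K e + algebraMap R K ϖ ^ c * algebraMap R K z = algebraMap R K ϖ ^ n := by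
  rcases eq_or_ne w 0 with rfl | hw
  · exact ⟨c, le_rfl, 1, 1, by simp⟩
  obtain ⟨n, u, hu⟩ := exists_mul_unit_eq_zpow hϖ hw
  rcases le_or_gt n c with hn | hn
  · exact ⟨n, hn, u, 0, by simp [hu]⟩
  · have hϖ₀ : algebraMap R K ϖ ≠ 0 := by simpa using hϖ.ne_zero
    obtain ⟨r, hr⟩ := exists_algebraMap_eq_zpow (K := K) ϖ (sub_nonneg.2 hn.le)
    refine ⟨c, le_rfl, u, 1 - r, ?_⟩
    rw [hu, map_sub, map_one, mul_sub, hr, ← zpow_add₀ hϖ₀, mul_one, add_sub_cancel,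
      add_sub_cancel]

theorem exists_isUnit_mul_mul_eq_diagonal_zpow (hϖ : Irreducible ϖ) {n : ℕ}
    (A : Matrix (Fin n) (Fin n) K) (hA : A.det ≠ 0) :
    ∃ (P Q : Matrix (Fin n) (Fin n) R) (a : Fin n → ℤ), IsUnit P ∧ IsUnit Q ∧ Monotone a ∧
      P.map (algebraMap R K) * A * Q.map (algebraMap R K) =
        diagonal fun i => algebraMap R K ϖ ^ a i := by
  obtain ⟨P, Q, d, hP, hQ, hPQ⟩ := exists_isUnit_map_mul_mul_map_eq_diagonal R A hA
  have hd (i : Fin n) : d i ≠ 0 := by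
    have h := mul_ne_zero (mul_ne_zero (det_map_ne_zero_of_isUnit hP) hA)
      (det_map_ne_zero_of_isUnit hQ)
    rw [← det_mul, ← det_mul, hPQ, det_diagonal] at h
    exact Finset.prod_ne_zero_iff.1 h i (Finset.mem_univ i)
  choose a u hu using fun i => exists_mul_unit_eq_zpow hϖ (hd i)
  let U : Matrix (Fin n) (Fin n) R := diagonal fun i => ↑(u i)
  have hU : IsUnit U := by simp [U, Pi.isUnit_iff]
  let σ := Tuple.sort a
  refine ⟨P.submatrix σ (Equiv.refl _), (Q * U).submatrix (Equiv.refl _) σ, a ∘ σ,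
    (isUnit_submatrix_equiv _ _).2 hP, (isUnit_submatrix_equiv _ _).2 (hQ.mul hU),
    Tuple.monotone_sort a, ?_⟩
  calc (P.submatrix σ (Equiv.refl _)).map (algebraMap R K) * A *
        ((Q * U).submatrix (Equiv.refl _) σ).map (algebraMap R K)
      = (P.map (algebraMap R K) * A * (Q * U).map (algebraMap R K)).submatrix σ σ := rfl
    _ = (diagonal fun i => algebraMap R K ϖ ^ a i).submatrix σ σ := by
        rw [Matrix.map_mul, ← Matrix.mul_assoc, hPQ, diagonal_map (map_zero _),
          diagonal_mul_diagonal]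
        simp only [hu]
    _ = diagonal fun i => algebraMap R K ϖ ^ (a ∘ σ) i := submatrix_diagonal_equiv ..

theorem exists_isUnit_isLowerTriangular_mul_diag_eq_zpow (hϖ : Irreducible ϖ) {n : ℕ}
    (A : Matrix (Fin n) (Fin n) K) (hA : A.det ≠ 0) :
    ∃ (C : Matrix (Fin n) (Fin n) R) (d : Fin n → ℤ), IsUnit C ∧
      (A * C.map (algebraMap R K)).IsLowerTriangular ∧
      ∀ i, (A * C.map (algebraMap R K)) i i = algebraMap R K ϖ ^ d i := by
  obtain ⟨C, hC, hlower⟩ := exists_isUnit_isLowerTriangular_mul R A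
  have hdiag (i : Fin n) : (A * C.map (algebraMap R K)) i i ≠ 0 := by
    have h := mul_ne_zero hA (det_map_ne_zero_of_isUnit (K := K) hC)
    rw [← det_mul, det_of_isLowerTriangular _ hlower] at h
    exact Finset.prod_ne_zero_iff.1 h i (Finset.mem_univ i)
  choose d u hu using fun i => exists_mul_unit_eq_zpow hϖ (hdiag i)
  let U : Matrix (Fin n) (Fin n) R := diagonal fun i => ↑(u i)
  have hU : IsUnit U := by simp [U, Pi.isUnit_iff]
  have hmul : A * (C * U).map (algebraMap R K) =
      A * C.map (algebraMap R K) * diagonal fun i => algebraMap R K (u i) := by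
    rw [Matrix.map_mul, ← Matrix.mul_assoc, diagonal_map (map_zero _)]
  refine ⟨C * U, d, hC.mul hU, ?_, fun i => ?_⟩
  · rw [hmul]
    exact hlower.mul (blockTriangular_diagonal _)
  · rw [hmul, mul_diagonal, hu]

end IsDiscreteValuationRing

theorem mul_apply_self_of_isLowerTriangular {n α : Type*} [LinearOrder n] [Fintype n]
    [NonUnitalNonAssocSemiring α] {A B : Matrix n n α} (hA : A.IsLowerTriangular)
    (hB : B.IsLowerTriangular) (i : n) : (A * B) i i = A i i * B i i := by
  rw [mul_apply]
  refine Finset.sum_eq_single i (fun k _ hk => ?_) (by simp)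
  rcases hk.lt_or_gt with h | h
  · rw [hB h, mul_zero]
  · rw [hA h, zero_mul]

section Unipotent

variable {K m n : Type*} [Field K] [Fintype m] [DecidableEq m] [Fintype n] [LinearOrder n]

theorem exists_isLowerTriangular_mul_eq_diagonal (T : Matrix n n K) (hT : T.IsLowerTriangular)
    (hT₀ : ∀ i, T i i ≠ 0) :
    ∃ Y : Matrix n n K, Y.IsLowerTriangular ∧ (∀ i, Y i i = 1) ∧ Y * T = diagonal T.diag := by
  have hdet : IsUnit T.det := by
    rw [det_of_isLowerTriangular T hT]
    exact (Finset.prod_ne_zero_iff.2 fun i _ => hT₀ i).isUnit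
  have := T.invertibleOfIsUnitDet hdet
  have hY : (diagonal T.diag * T⁻¹).IsLowerTriangular :=
    .mul (blockTriangular_diagonal _) (blockTriangular_inv_of_blockTriangular hT)
  have hYT : diagonal T.diag * T⁻¹ * T = diagonal T.diag := nonsing_inv_mul_cancel_right _ _ hdet
  refine ⟨diagonal T.diag * T⁻¹, hY, fun i => mul_right_cancel₀ (hT₀ i) ?_, hYT⟩
  rw [← mul_apply_self_of_isLowerTriangular hY hT, hYT, diagonal_apply_eq, one_mul, diag_apply]

/-- Membership in the unipotent radical of the lower parabolic subgroup whose Levi factor has the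
block `m` followed by blocks of size one indexed by `n`; for `m` of size `M + 1` this is
`U⁻_{M,N}`. -/
def IsNegUnipotent (u : Matrix (m ⊕ n) (m ⊕ n) K) : Prop :=
  ∃ (X : Matrix n m K) (Y : Matrix n n K), Y.IsLowerTriangular ∧ (∀ i, Y i i = 1) ∧
    u = fromBlocks 1 0 X Y

theorem exists_isNegUnipotent_mul_fromBlocks {L : Matrix m m K} (hL : IsUnit L.det)
    (B : Matrix n m K) {T : Matrix n n K} (hT : T.IsLowerTriangular) (hT₀ : ∀ i, T i i ≠ 0) :
    ∃ u : Matrix (m ⊕ n) (m ⊕ n) K, IsNegUnipotent u ∧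
      u * fromBlocks L 0 B T = fromBlocks L 0 0 (diagonal T.diag) := by
  obtain ⟨Y, hY, hY₁, hYT⟩ := exists_isLowerTriangular_mul_eq_diagonal T hT hT₀
  refine ⟨_, ⟨-(Y * B * L⁻¹), Y, hY, hY₁, rfl⟩, ?_⟩
  simp [fromBlocks_multiply, nonsing_inv_mul_cancel_right _ _ hL, hYT]

end Unipotent

section Mirabolic

variable {m n : Type*} [Fintype m] [DecidableEq m] [Fintype n] [DecidableEq n]

/-- The matrix with upper left block `D`, last row `(v, x)` and zero elsewhere. -/
def rowBordered {K : Type*} [Zero K] (D : Matrix m m K) (v : m → K) (x : K) :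
    Matrix (m ⊕ Fin 1) (m ⊕ Fin 1) K :=
  fromBlocks D 0 (replicateRow (Fin 1) v) (of fun _ _ => x)

/-- `A` and `B` lie in the same double coset of `GL_m(R)`, embedded as the upper left block, on
the left, and of `GL_{m + n}(R)`, on the right. -/
def MirabolicRel (R : Type*) {K : Type*} [CommRing R] [CommRing K] [Algebra R K]
    (A B : Matrix (m ⊕ n) (m ⊕ n) K) : Prop :=
  ∃ (g : Matrix m m R) (C : Matrix (m ⊕ n) (m ⊕ n) R), IsUnit g ∧ IsUnit C ∧
    fromBlocks (g.map (algebraMap R K)) 0 0 1 * A * C.map (algebraMap R K) = B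

variable {R K : Type*} [CommRing R] [CommRing K] [Algebra R K]

theorem MirabolicRel.trans {A B C : Matrix (m ⊕ n) (m ⊕ n) K} (hAB : MirabolicRel R A B)
    (hBC : MirabolicRel R B C) : MirabolicRel R A C := by
  obtain ⟨g, E, hg, hE, rfl⟩ := hAB
  obtain ⟨g', E', hg', hE', rfl⟩ := hBC
  refine ⟨g' * g, E * E', hg'.mul hg, hE.mul hE', ?_⟩
  have hmul : fromBlocks ((g' * g).map (algebraMap R K)) 0 0 (1 : Matrix n n K) =
      fromBlocks (g'.map (algebraMap R K)) 0 0 1 * fromBlocks (g.map (algebraMap R K)) 0 0 1 := by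
    simp [fromBlocks_multiply, Matrix.map_mul]
  rw [hmul, Matrix.map_mul]
  simp only [Matrix.mul_assoc]

theorem mirabolicRel_rowBordered {D D' : Matrix m m K} {v w : m → K} {x : K}
    {g E : Matrix m m R} (z : m → R) (hg : IsUnit g) (hE : IsUnit E)
    (hD : g.map (algebraMap R K) * D * E.map (algebraMap R K) = D')
    (hv : v ᵥ* E.map (algebraMap R K) + x • (algebraMap R K ∘ z) = w) :
    MirabolicRel R (rowBordered D v x) (rowBordered D' w x) := by
  refine ⟨g, fromBlocks E 0 (replicateRow (Fin 1) z) 1, hg,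
    isUnit_fromBlocks_zero₁₂.2 ⟨hE, isUnit_one⟩, ?_⟩
  have hrow : replicateRow (Fin 1) v * E.map (algebraMap R K) +
      of (fun _ _ : Fin 1 => x) * (replicateRow (Fin 1) z).map (algebraMap R K) =
        replicateRow (Fin 1) w := by
    rw [← hv]
    ext i j
    simp [vecMul, dotProduct, mul_apply]
  simp [rowBordered, fromBlocks_multiply, fromBlocks_map, hD, hrow]

/-- The matrix whose `j`-th column is `r j` times the standard basis vector indexed by `f j`. -/
def singleColumns {α : Type*} [Zero α] (f : m → m) (r : m → α) : Matrix m m α :=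
  of fun i j => Pi.single (M := fun _ => α) (f j) (r j) i

theorem singleColumns_mul_self {f : m → m} {r : m → R} (hr : ∀ j, r (f j) = 0) :
    singleColumns f r * singleColumns f r = 0 := by
  ext i j
  simp [singleColumns, mul_apply, Pi.single_apply, hr]

theorem mirabolicRel_rowBordered_diagonal {a v w : m → K} {x : K} {f : m → m} {r r' : m → R}
    (hr : ∀ j, r (f j) = 0) (hr' : ∀ j, r' (f j) = 0)
    (ha : ∀ j, algebraMap R K (r' j) * a j = a (f j) * algebraMap R K (r j))
    (hw : ∀ j, v j + v (f j) * algebraMap R K (r j) = w j) :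
    MirabolicRel R (rowBordered (diagonal a) v x) (rowBordered (diagonal a) w x) := by
  let N := (singleColumns f r).map (algebraMap R K)
  let N' := (singleColumns f r').map (algebraMap R K)
  have hN : N * N = 0 := by rw [← Matrix.map_mul, singleColumns_mul_self hr]; simp
  have hconj : N' * diagonal a = diagonal a * N := by
    ext i j
    rcases eq_or_ne i (f j) with rfl | hij
    · simp [N, N', singleColumns, ha]
    · simp [N, N', singleColumns, hij]
  have hvN : v ᵥ* N = fun j => v (f j) * algebraMap R K (r j) := by
    ext j
    simp [N, singleColumns, vecMul, dotProduct, Pi.single_apply, apply_ite (algebraMap R K)]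
  refine mirabolicRel_rowBordered (g := 1 - singleColumns f r') (E := 1 + singleColumns f r) 0
    (IsNilpotent.isUnit_one_sub ⟨2, by rw [pow_two, singleColumns_mul_self hr']⟩)
    (IsNilpotent.isUnit_one_add ⟨2, by rw [pow_two, singleColumns_mul_self hr]⟩) ?_ ?_
  · calc (1 - singleColumns f r').map (algebraMap R K) * diagonal a *
          (1 + singleColumns f r).map (algebraMap R K)
        = (1 - N') * diagonal a * (1 + N) := by simp [N, N', Matrix.map_add, Matrix.map_sub]
      _ = diagonal a - diagonal a * (N * N) := by
        rw [sub_mul, one_mul, hconj]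
        noncomm_ring
      _ = diagonal a := by rw [hN, mul_zero, sub_zero]
  · ext j
    simpa [Matrix.map_add, vecMul_add, ← hw] using congrFun hvN j

end Mirabolic

theorem exists_argmin_add_of_triangle {ι α : Type*} [Finite ι] [AddCommGroup α] [LinearOrder α]
    [IsOrderedAddMonoid α] (w : ι → α) (d : ι → ι → α) (hd : ∀ i, d i i = 0)
    (htri : ∀ i j k, d i k ≤ d i j + d j k) :
    ∃ f : ι → ι, (∀ i j, w (f j) + d (f j) j ≤ w i + d i j) ∧
      ∀ j, w (f (f j)) + d (f (f j)) (f j) = w (f j) := by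
  have h (j : ι) : ∃ i, ∀ k, w i + d i j ≤ w k + d k j :=
    have : Nonempty ι := ⟨j⟩
    Finite.exists_min fun i => w i + d i j
  choose f hf using h
  refine ⟨f, fun i j => hf j i, fun j => le_antisymm ?_ ?_⟩
  · simpa [hd] using hf (f j) (f j)
  · refine le_of_add_le_add_right (a := d (f j) j) ?_
    calc w (f j) + d (f j) j ≤ w (f (f j)) + d (f (f j)) j := hf j _
      _ ≤ w (f (f j)) + (d (f (f j)) (f j) + d (f j) j) := by gcongr; exact htri ..
      _ = w (f (f j)) + d (f (f j)) (f j) + d (f j) j := (add_assoc ..).symm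

theorem exists_argmin_add_max_sub {ι : Type*} [Finite ι] (a θ : ι → ℤ) :
    ∃ (f : ι → ι) (k : ι → ℤ), (∀ j, 0 ≤ k j) ∧ (∀ j, a j - a (f j) ≤ k j) ∧
      (∀ j, θ (f j) + k j ≤ θ j) ∧ (∀ j, θ (f (f j)) + k (f j) = θ (f j)) ∧
      ∀ i j, θ (f j) + k j ≤ θ (f i) + k i + max 0 (a j - a i) := by
  let d (i j : ι) : ℤ := max 0 (a j - a i)
  have htri (i j k : ι) : d i k ≤ d i j + d j k := by
    simp only [d]
    omega
  obtain ⟨f, hf, hff⟩ := exists_argmin_add_of_triangle θ d (by simp [d]) htri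
  refine ⟨f, fun j => d (f j) j, fun _ => le_max_left .., fun _ => le_max_right ..,
    fun j => by simpa [d] using hf j j, hff, fun i j => ?_⟩
  calc θ (f j) + d (f j) j ≤ θ (f i) + d (f i) j := hf (f i) j
    _ ≤ θ (f i) + d (f i) i + d i j := by linarith [htri (f i) i j]

theorem monotone_of_le_add_max_sub {ι : Type*} [Preorder ι] {a θ : ι → ℤ} (ha : Monotone a)
    (h : ∀ i j, θ j ≤ θ i + max 0 (a j - a i)) : Monotone θ := fun i j hij => by
  simpa [max_eq_left (sub_nonpos.2 (ha hij))] using h j i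

theorem monotone_sub_of_le_add_max_sub {ι : Type*} [Preorder ι] {a θ : ι → ℤ} (ha : Monotone a)
    (h : ∀ i j, θ j ≤ θ i + max 0 (a j - a i)) : Monotone (a - θ) := fun i j hij => by
  have hij' := h i j
  rw [max_eq_right (sub_nonneg.2 (ha hij))] at hij'
  simp only [Pi.sub_apply]
  linarith

section Field

variable {R K m : Type*} [CommRing R] [Field K] [Algebra R K] [FaithfulSMul R K] [Fintype m]
  [DecidableEq m] {ϖ : R}

theorem mirabolicRel_rowBordered_zpow_add (hϖ : ϖ ≠ 0) {a θ k : m → ℤ} {f : m → m}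
    (hk : ∀ j, 0 ≤ k j) (hak : ∀ j, a j - a (f j) ≤ k j) (hθ : ∀ j, θ (f j) + k j ≤ θ j)
    (hf : ∀ j, θ (f (f j)) + k (f j) = θ (f j)) (x : K) :
    MirabolicRel R
      (rowBordered (diagonal fun i => algebraMap R K ϖ ^ a i) (fun i => algebraMap R K ϖ ^ θ i) x)
      (rowBordered (diagonal fun i => algebraMap R K ϖ ^ a i)
        (fun i => algebraMap R K ϖ ^ (θ (f i) + k i)) x) := by
  have hinj : Function.Injective (algebraMap R K) := FaithfulSMul.algebraMap_injective R K
  have hϖ₀ : algebraMap R K ϖ ≠ 0 := by simpa using hϖ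
  choose p hp using fun j => exists_algebraMap_eq_zpow (K := K) ϖ (hk j)
  choose q hq using fun j => exists_algebraMap_eq_zpow (K := K) ϖ
    (n := θ j - θ (f j)) (by linarith [hθ j, hk j])
  choose p' hp' using fun j => exists_algebraMap_eq_zpow (K := K) ϖ
    (n := a (f j) - a j + k j) (by linarith [hak j])
  choose q' hq' using fun j => exists_algebraMap_eq_zpow (K := K) ϖ
    (n := a (f j) - a j + (θ j - θ (f j))) (by linarith [hθ j, hak j])
  have hkf (j : m) : k (f j) = θ (f j) - θ (f (f j)) := by linarith [hf j]
  have hshift (j : m) (l : ℤ) :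
      algebraMap R K ϖ ^ (a (f j) - a j + l) * algebraMap R K ϖ ^ a j =
        algebraMap R K ϖ ^ a (f j) * algebraMap R K ϖ ^ l := by
    rw [← zpow_add₀ hϖ₀, ← zpow_add₀ hϖ₀]
    congr 1
    ring
  -- Adding `ϖ ^ k j - ϖ ^ (θ j - θ (f j))` times column `f j` to column `j` replaces the last entry
  -- `ϖ ^ θ j` by `ϖ ^ (θ (f j) + k j)`; by `hf` this coefficient is zero for columns `f j`.
  refine mirabolicRel_rowBordered_diagonal (f := f) (r := p - q) (r' := p' - q')
    (fun j => hinj ?_) (fun j => hinj ?_) (fun j => ?_) (fun j => ?_)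
  · simp [hp, hq, hkf]
  · simp [hp', hq', hkf]
  · simp only [Pi.sub_apply, map_sub, hp, hq, hp', hq', sub_mul, mul_sub, hshift]
  · simp [hp, hq, mul_sub, ← zpow_add₀ hϖ₀]

theorem exists_mirabolicRel_rowBordered_monotone [Preorder m] (hϖ : ϖ ≠ 0) {a : m → ℤ}
    (ha : Monotone a) (θ : m → ℤ) (x : K) :
    ∃ θ' : m → ℤ, θ' ≤ θ ∧ Monotone θ' ∧ Monotone (a - θ') ∧ MirabolicRel R
      (rowBordered (diagonal fun i => algebraMap R K ϖ ^ a i) (fun i => algebraMap R K ϖ ^ θ i) x)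
      (rowBordered (diagonal fun i => algebraMap R K ϖ ^ a i)
        (fun i => algebraMap R K ϖ ^ θ' i) x) := by
  obtain ⟨f, k, hk, hak, hle, hf, hmax⟩ := exists_argmin_add_max_sub a θ
  exact ⟨fun j => θ (f j) + k j, hle, monotone_of_le_add_max_sub ha hmax,
    monotone_sub_of_le_add_max_sub ha hmax, mirabolicRel_rowBordered_zpow_add hϖ hk hak hle hf x⟩

end Field

section IsDiscreteValuationRing

variable {R K : Type*} [CommRing R] [IsDomain R] [IsDiscreteValuationRing R]
  [Field K] [Algebra R K] [IsFractionRing R K] {ϖ : R}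

theorem exists_mirabolicRel_rowBordered_zpow {m : Type*} [Fintype m] [DecidableEq m]
    (hϖ : Irreducible ϖ) (a : m → ℤ) (w : m → K) (c : ℤ) :
    ∃ θ : m → ℤ, (∀ i, θ i ≤ c) ∧ MirabolicRel R
      (rowBordered (diagonal fun i => algebraMap R K ϖ ^ a i) w (algebraMap R K ϖ ^ c))
      (rowBordered (diagonal fun i => algebraMap R K ϖ ^ a i) (fun i => algebraMap R K ϖ ^ θ i)
        (algebraMap R K ϖ ^ c)) := by
  choose θ hθ e z h using fun i => exists_mul_unit_add_mul_eq_zpow hϖ (w i) c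
  refine ⟨θ, hθ, mirabolicRel_rowBordered (g := diagonal fun i => ↑(e i)⁻¹)
    (E := diagonal fun i => ↑(e i)) z (by simp [Pi.isUnit_iff]) (by simp [Pi.isUnit_iff]) ?_ ?_⟩
  · rw [diagonal_map (map_zero _), diagonal_map (map_zero _), diagonal_mul_diagonal,
      diagonal_mul_diagonal]
    congr! 2 with i
    rw [mul_right_comm, ← map_mul, Units.inv_mul, map_one, one_mul]
  · ext i
    simp [diagonal_map, vecMul_diagonal, h]

theorem exists_mirabolicRel_rowBordered_dominant (hϖ : Irreducible ϖ) {n : ℕ}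
    {D : Matrix (Fin n) (Fin n) K} (hD : D.det ≠ 0) (v : Fin n → K) (c : ℤ) :
    ∃ lam θ : Fin n → ℤ, Monotone lam ∧ Monotone θ ∧ (∀ i, θ i ≤ c) ∧ MirabolicRel R
      (rowBordered D v (algebraMap R K ϖ ^ c))
      (rowBordered (diagonal fun i => algebraMap R K ϖ ^ (lam i + θ i))
        (fun i => algebraMap R K ϖ ^ θ i) (algebraMap R K ϖ ^ c)) := by
  obtain ⟨P, Q, a, hP, hQ, ha, hPQ⟩ := exists_isUnit_mul_mul_eq_diagonal_zpow hϖ D hD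
  obtain ⟨θ, hθc, hrel⟩ :=
    exists_mirabolicRel_rowBordered_zpow hϖ a (v ᵥ* Q.map (algebraMap R K)) c
  obtain ⟨θ', hle, hθ', hlam, hrel'⟩ :=
    exists_mirabolicRel_rowBordered_monotone hϖ.ne_zero ha θ (algebraMap R K ϖ ^ c)
  refine ⟨a - θ', θ', hlam, hθ', fun i => (hle i).trans (hθc i), ?_⟩
  simp only [Pi.sub_apply, sub_add_cancel]
  exact (mirabolicRel_rowBordered 0 hP hQ hPQ (by simp)).trans (hrel.trans hrel')

end IsDiscreteValuationRing

theorem monotone_snoc {α : Type*} [Preorder α] {n : ℕ} {f : Fin n → α} (hf : Monotone f) {x : α}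
    (hx : ∀ i, f i ≤ x) : Monotone (Fin.snoc f x : Fin (n + 1) → α) := by
  intro i j hij
  cases j using Fin.lastCases with
  | last => cases i using Fin.lastCases <;> simp [hx]
  | cast j =>
    cases i using Fin.lastCases with
    | last => exact absurd hij (Fin.castSucc_lt_last j).not_ge
    | cast i => simpa using hf (Fin.castSucc_le_castSucc_iff.1 hij)

section IsDiscreteValuationRing

variable {R K : Type*} [CommRing R] [IsDomain R] [IsDiscreteValuationRing R]
  [Field K] [Algebra R K] [IsFractionRing R K] {ϖ : R}

theorem exists_isUnit_mul_eq_fromBlocks (hϖ : Irreducible ϖ) {m : Type*} [Fintype m]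
    [DecidableEq m] {n : ℕ} (A : Matrix (m ⊕ Fin n) (m ⊕ Fin n) K) (hA : A.det ≠ 0) :
    ∃ (C : Matrix (m ⊕ Fin n) (m ⊕ Fin n) R) (L : Matrix m m K) (B : Matrix (Fin n) m K)
      (T : Matrix (Fin n) (Fin n) K) (d : Fin n → ℤ), IsUnit C ∧ L.det ≠ 0 ∧
      T.IsLowerTriangular ∧ (∀ i, T i i = algebraMap R K ϖ ^ d i) ∧
      A * C.map (algebraMap R K) = fromBlocks L 0 B T := by
  let e : m ⊕ Fin n ≃ Fin (Fintype.card m + n) :=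
    ((Fintype.equivFin m).sumCongr (Equiv.refl _)).trans finSumFinEquiv
  obtain ⟨C, d, hC, hlower, hdiag⟩ := exists_isUnit_isLowerTriangular_mul_diag_eq_zpow hϖ
    (A.submatrix e.symm e.symm) (by rwa [det_submatrix_equiv_self])
  let H := A * (C.submatrix e e).map (algebraMap R K)
  have hH (i j : m ⊕ Fin n) :
      H i j = (A.submatrix e.symm e.symm * C.map (algebraMap R K)) (e i) (e j) := by
    simp only [H, mul_apply, submatrix_apply, map_apply, Equiv.symm_apply_apply]
    exact Fintype.sum_equiv e _ _ fun k => by rw [Equiv.symm_apply_apply]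
  have hH₁₂ : H.toBlocks₁₂ = 0 := by
    ext i j
    exact (hH _ _).trans (hlower (by simp [e, Fin.lt_def]; omega))
  have hH₀ : H = fromBlocks H.toBlocks₁₁ 0 H.toBlocks₂₁ H.toBlocks₂₂ := by
    rw [← hH₁₂, fromBlocks_toBlocks]
  have hCe : IsUnit (C.submatrix e e) := (isUnit_submatrix_equiv e e).2 hC
  refine ⟨C.submatrix e e, H.toBlocks₁₁, H.toBlocks₂₁, H.toBlocks₂₂,
    fun i => d (e (.inr i)), hCe, ?_, fun i j hij => ?_, fun i => ?_, hH₀⟩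
  · have hdet : H.det ≠ 0 := by
      rw [det_mul]
      exact mul_ne_zero hA (det_map_ne_zero_of_isUnit hCe)
    rw [hH₀, det_fromBlocks_zero₁₂] at hdet
    exact left_ne_zero_of_mul hdet
  · exact (hH _ _).trans (hlower (by simpa [e] using hij))
  · exact (hH _ _).trans (hdiag _)

theorem exists_mirabolicRel_rowBordered (hϖ : Irreducible ϖ) {n : ℕ}
    {L : Matrix (Fin n ⊕ Fin 1) (Fin n ⊕ Fin 1) K} (hL : L.det ≠ 0) :
    ∃ (lam : Fin n → ℤ) (θ : Fin (n + 1) → ℤ), Monotone lam ∧ Monotone θ ∧ MirabolicRel R L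
      (rowBordered (diagonal fun i => algebraMap R K ϖ ^ (lam i + θ i.castSucc))
        (fun i => algebraMap R K ϖ ^ θ i.castSucc) (algebraMap R K ϖ ^ θ (Fin.last n))) := by
  obtain ⟨C, D, v, T, d, hC, hD, -, hT, hLC⟩ := exists_isUnit_mul_eq_fromBlocks hϖ L hL
  have hbordered : fromBlocks D 0 v T = rowBordered D (v 0) (algebraMap R K ϖ ^ d 0) := by
    rw [rowBordered]
    congr 1
    · ext i j
      rw [Subsingleton.elim i 0, replicateRow_apply]
    · ext i j
      rw [Subsingleton.elim i 0, Subsingleton.elim j 0, hT, of_apply]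
  have hrel : MirabolicRel R L (rowBordered D (v 0) (algebraMap R K ϖ ^ d 0)) :=
    ⟨1, C, isUnit_one, hC, by simp [hLC, hbordered]⟩
  obtain ⟨lam, θ, hlam, hθ, hθd, hrel'⟩ :=
    exists_mirabolicRel_rowBordered_dominant hϖ hD (v 0) (d 0)
  refine ⟨lam, Fin.snoc θ (d 0), hlam, monotone_snoc hθ hθd, ?_⟩
  simpa only [Fin.snoc_castSucc, Fin.snoc_last] using hrel.trans hrel'

/-- The representative `L_{(λ,(θ,θ'))}` over the field `K` with `t` in the role of the uniformizer,
its rows and columns being split into blocks of sizes `M`, `1` and `N - M - 1`. -/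
def cosetRep {M k : ℕ} (t : K) (lam : Fin M → ℤ) (th : Fin (M + 1) → ℤ) (th' : Fin k → ℤ) :
    Matrix ((Fin M ⊕ Fin 1) ⊕ Fin k) ((Fin M ⊕ Fin 1) ⊕ Fin k) K :=
  fromBlocks
    (rowBordered (diagonal fun i => t ^ (lam i + th i.castSucc)) (fun i => t ^ th i.castSucc)
      (t ^ th (Fin.last M)))
    0 0 (diagonal fun i => t ^ th' i)

theorem stmt3_general (hϖ : Irreducible ϖ) {M k : ℕ}
    (A : Matrix ((Fin M ⊕ Fin 1) ⊕ Fin k) ((Fin M ⊕ Fin 1) ⊕ Fin k) K) (hA : IsUnit A.det) :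
    ∃ (lam : Fin M → ℤ) (th : Fin (M + 1) → ℤ) (th' : Fin k → ℤ) (g : Matrix (Fin M) (Fin M) R)
      (u : Matrix ((Fin M ⊕ Fin 1) ⊕ Fin k) ((Fin M ⊕ Fin 1) ⊕ Fin k) K)
      (C : Matrix ((Fin M ⊕ Fin 1) ⊕ Fin k) ((Fin M ⊕ Fin 1) ⊕ Fin k) R),
      Monotone lam ∧ Monotone th ∧ IsUnit g ∧ IsNegUnipotent u ∧ IsUnit C ∧
        fromBlocks (fromBlocks (g.map (algebraMap R K)) 0 0 1) 0 0 1 * u * A *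
          C.map (algebraMap R K) = cosetRep (algebraMap R K ϖ) lam th th' := by
  obtain ⟨C, L, B, T, th', hC, hL, hT, hTdiag, hAC⟩ :=
    exists_isUnit_mul_eq_fromBlocks hϖ A hA.ne_zero
  have hϖ₀ : algebraMap R K ϖ ≠ 0 := by simpa using hϖ.ne_zero
  obtain ⟨u, hu, huL⟩ := exists_isNegUnipotent_mul_fromBlocks hL.isUnit B hT
    fun i => hTdiag i ▸ zpow_ne_zero _ hϖ₀
  obtain ⟨lam, th, hlam, hth, g, E, hg, hE, hgE⟩ := exists_mirabolicRel_rowBordered (R := R) hϖ hL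
  refine ⟨lam, th, th', g, u, C * fromBlocks E 0 0 1, hlam, hth, hg, hu,
    hC.mul (isUnit_fromBlocks_zero₂₁.2 ⟨hE, isUnit_one⟩), ?_⟩
  let G : Matrix ((Fin M ⊕ Fin 1) ⊕ Fin k) ((Fin M ⊕ Fin 1) ⊕ Fin k) K :=
    fromBlocks (fromBlocks (g.map (algebraMap R K)) 0 0 1) 0 0 1
  calc G * u * A * (C * fromBlocks E 0 0 1).map (algebraMap R K)
      = G * (u * (A * C.map (algebraMap R K))) * fromBlocks (E.map (algebraMap R K)) 0 0 1 := by
        simp [Matrix.map_mul, fromBlocks_map, Matrix.mul_assoc]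
    _ = G * fromBlocks L 0 0 (diagonal T.diag) * fromBlocks (E.map (algebraMap R K)) 0 0 1 := by
        rw [hAC, huL]
    _ = cosetRep (algebraMap R K ϖ) lam th th' := by
        simp [G, cosetRep, fromBlocks_multiply, hgE, hTdiag]

end IsDiscreteValuationRing

section LaurentSeries

open PowerSeries

theorem tpow_eq_algebraMap_X_zpow (k : ℤ) : tpow k = algebraMap ℂ⟦X⟧ F X ^ k := by
  rw [tpow, LaurentSeries.coe_algebraMap, HahnSeries.ofPowerSeries_X]

theorem algebraMap_mem_Oint (f : ℂ⟦X⟧) : algebraMap ℂ⟦X⟧ F f ∈ Oint := fun m hm => by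
  rw [LaurentSeries.coe_algebraMap, PowerSeries.coeff_coe, if_pos hm]

theorem inGLO_map_of_isUnit {n : ℕ} {C : Matrix (Fin n) (Fin n) ℂ⟦X⟧} (hC : IsUnit C) :
    InGLO (C.map (algebraMap ℂ⟦X⟧ F)) := by
  obtain ⟨B, hCB, hBC⟩ := isUnit_iff_exists.1 hC
  refine ⟨B.map (algebraMap ℂ⟦X⟧ F), fun i j => algebraMap_mem_Oint _,
    fun i j => algebraMap_mem_Oint _, ?_, ?_⟩ <;>
  simp [← Matrix.map_mul, hCB, hBC]

/-- The identification of the index set of `GL_{M + 1 + k}` with its partition into blocks of sizes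
`M`, `1` and `k`, in this order. -/
def blockEquiv (M k : ℕ) : (Fin M ⊕ Fin 1) ⊕ Fin k ≃ Fin (M + 1 + k) :=
  (finSumFinEquiv.sumCongr (Equiv.refl _)).trans finSumFinEquiv

variable {M k : ℕ}

@[simp]
theorem blockEquiv_inl_inl (i : Fin M) : (blockEquiv M k (.inl (.inl i)) : ℕ) = i := by
  simp [blockEquiv]

@[simp]
theorem blockEquiv_inl_inr (i : Fin 1) : (blockEquiv M k (.inl (.inr i)) : ℕ) = M := by
  simp [blockEquiv]

@[simp]
theorem blockEquiv_inr (i : Fin k) : (blockEquiv M k (.inr i) : ℕ) = M + 1 + i := by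
  simp [blockEquiv]

theorem embTop_submatrix_blockEquiv (g : Matrix (Fin M) (Fin M) F) :
    (embTop M (M + 1 + k) g).submatrix (blockEquiv M k) (blockEquiv M k) =
      fromBlocks (fromBlocks g 0 0 1) 0 0 1 := by
  refine Matrix.ext fun i j => ?_
  rcases i with (i | i) | i <;> rcases j with (j | j) | j <;>
    simp only [embTop, submatrix_apply, blockEquiv_inl_inl, blockEquiv_inl_inr, blockEquiv_inr,
      fromBlocks_apply₁₁, fromBlocks_apply₁₂, fromBlocks_apply₂₁, fromBlocks_apply₂₂, one_apply,
      Matrix.zero_apply, Fin.ext_iff] <;>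
    split_ifs <;> first | rfl | omega

theorem LmatN_submatrix_blockEquiv (lam : Fin M → ℤ) (th : Fin (M + 1) → ℤ) (th' : Fin k → ℤ) :
    (LmatN M k lam th th').submatrix (blockEquiv M k) (blockEquiv M k) =
      cosetRep (algebraMap ℂ⟦X⟧ F X) lam th th' := by
  refine Matrix.ext fun i j => ?_
  rcases i with (i | i) | i <;> rcases j with (j | j) | j <;>
    simp only [LmatN, cosetRep, rowBordered, submatrix_apply, blockEquiv_inl_inl,
      blockEquiv_inl_inr, blockEquiv_inr, fromBlocks_apply₁₁, fromBlocks_apply₁₂,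
      fromBlocks_apply₂₁, fromBlocks_apply₂₂, replicateRow_apply, of_apply, diagonal_apply,
      Matrix.zero_apply, Fin.ext_iff, ← tpow_eq_algebraMap_X_zpow, add_tsub_cancel_left] <;>
    split_ifs <;> first | rfl | omega

theorem IsNegUnipotent.inUminus_submatrix
    {u : Matrix ((Fin M ⊕ Fin 1) ⊕ Fin k) ((Fin M ⊕ Fin 1) ⊕ Fin k) F} (hu : IsNegUnipotent u) :
    InUminus M (u.submatrix (blockEquiv M k).symm (blockEquiv M k).symm) := by
  obtain ⟨X, Y, hY, hY₁, rfl⟩ := hu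
  refine ⟨(blockEquiv M k).surjective.forall.2 fun i => ?_,
    (blockEquiv M k).surjective.forall₂.2 fun i j hij hrow => ?_⟩
  · rcases i with i | i <;> simp [hY₁]
  · simp only [submatrix_apply, Equiv.symm_apply_apply]
    rcases i with i | i <;> rcases j with j | j
    · exact one_apply_ne fun h => hij (by rw [h])
    · rfl
    · rcases j with j | j <;>
        simp only [blockEquiv_inl_inl, blockEquiv_inl_inr, blockEquiv_inr] at hrow <;> omega
    · simp only [blockEquiv_inr] at hrow
      have hle : i ≤ j := Fin.le_def.2 (by omega)
      exact hY (hle.lt_of_ne fun h => hij (by rw [h]))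

end LaurentSeries

/-- Every double coset `(GL_M(O) ⋉ U⁻_{M,N}(F)) \ GL_N(F) / GL_N(O)`
(`N = M+1+K`) has a representative of the form `L_{(λ,(θ,θ'))}` with `(λ,θ)` dominant of
length `(M, M+1)`: for every `A ∈ GL_N(F)` there are `g ∈ GL_M(O)`, `u ∈ U⁻_{M,N}(F)`,
`C ∈ GL_N(O)` and integer sequences `λ, θ, θ'` with `g · u · A · C = L_{(λ,(θ,θ'))}`. -/
theorem stmt3 (M K : ℕ) (A : Matrix (Fin (M + 1 + K)) (Fin (M + 1 + K)) F)
    (hA : IsUnit A.det) :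
    ∃ (lam : Fin M → ℤ) (th : Fin (M + 1) → ℤ) (th' : Fin K → ℤ)
      (g : Matrix (Fin M) (Fin M) F)
      (u C : Matrix (Fin (M + 1 + K)) (Fin (M + 1 + K)) F),
      Monotone lam ∧ Monotone th ∧ InGLO g ∧ InUminus M u ∧ InGLO C ∧
        embTop M (M + 1 + K) g * u * A * C = LmatN M K lam th th' := by
  let e := blockEquiv M K
  obtain ⟨lam, th, th', g, u, C, hlam, hth, hg, hu, hC, h⟩ :=
    stmt3_general (R := PowerSeries ℂ) PowerSeries.X_irreducible (A.submatrix e e)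
      (by rwa [det_submatrix_equiv_self])
  refine ⟨lam, th, th', g.map (algebraMap _ F), u.submatrix e.symm e.symm,
    (C.submatrix e.symm e.symm).map (algebraMap _ F), hlam, hth, inGLO_map_of_isUnit hg,
    hu.inUminus_submatrix, inGLO_map_of_isUnit ((isUnit_submatrix_equiv _ _).2 hC), ?_⟩
  apply (reindex e.symm e.symm).injective
  simpa [e, ← submatrix_mul_equiv _ _ _ e, submatrix_map, embTop_submatrix_blockEquiv,
    LmatN_submatrix_blockEquiv] using h
end
end

section
/- Let B ∈ GL_N(C((t))) be a matrix lying in both U⁻_M(F) t^{-ξ} GL_M(O) U⁻_{M,N}(F) L_{(λ,(θ,θ'))} GL_N(O) and D · U_N(F) · t^{(η,η')} · GL_N(O), where t^{-ξ} = diag(t^{-ξ_1},...,t^{-ξ_M},1,...,1). Then for every 1 ≤ i ≤ N-M-1: η'_{N-M-i} + ... + η'_{N-M-1} ≤ θ'_{N-M-i} + ... + θ'_{N-M-1}; for every 1 ≤ i ≤ M: (ξ_1+η_1) + ... + (ξ_i+η_i) ≥ (λ_1+θ_1) + ... + (λ_i+θ_i); and for every 0 ≤ i ≤ M: (ξ_1+η_1)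 + ... + (ξ_i+η_i) + η_{i+1} ≥ (λ_1+θ_1) + ... + (λ_i+θ_i) + θ_{i+1}. Equivalently (λ,(θ,θ')) ≥ (ξ,(η,η')) in the root order of GL(M|N). -/
/- Common setup: `F = ℂ((t))` the field of formal Laurent series, `O = ℂ[[t]]` its ring of
integers (elements with no negative coefficients), `tpow k = t^k`.  `InGLO A` says that the
square matrix `A` lies in `GL(O)`, i.e. both `A` and an inverse of `A` have entries in `O`. -/

noncomputable section

/-- Lower-triangular unipotent matrices. -/
def LowUnip {n : ℕ} (v : Matrix (Fin n) (Fin n) F) : Prop :=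
  (∀ i, v i i = 1) ∧ ∀ i j : Fin n, (i : ℕ) < (j : ℕ) → v i j = 0

/-- Upper-triangular unipotent matrices. -/
def UpUnip {n : ℕ} (v : Matrix (Fin n) (Fin n) F) : Prop :=
  (∀ i, v i i = 1) ∧ ∀ i j : Fin n, (j : ℕ) < (i : ℕ) → v i j = 0

/-- The diagonal matrix `diag(t^{f 0}, …, t^{f (n-1)})`. -/
noncomputable def tdiag {n : ℕ} (f : Fin n → ℤ) : Matrix (Fin n) (Fin n) F :=
  Matrix.diagonal fun i => tpow (f i)

/-- The matrix `D ∈ GL_N`: the identity matrix except that row `M+1` (1-based) is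
`(1,1,…,1,0,…,0)` with `M+1` ones. -/
noncomputable def Dmat (M K : ℕ) : Matrix (Fin (M + 1 + K)) (Fin (M + 1 + K)) F :=
  fun i j =>
    if (i : ℕ) = M then (if (j : ℕ) ≤ M then 1 else 0)
    else if i = j then 1 else 0

/-- Concatenation of `η : ℤ^{M+1}` and `η' : ℤ^{K}` into a sequence of length `N=M+1+K`. -/
def fullSeq (M K : ℕ) (eta : Fin (M + 1) → ℤ) (eta' : Fin K → ℤ) :
    Fin (M + 1 + K) → ℤ := fun i =>
  if h : (i : ℕ) < M + 1 then eta ⟨i, h⟩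
  else eta' ⟨(i : ℕ) - (M + 1), by have := i.isLt; omega⟩

/-- The exponent sequence of `t^{-ξ} = diag(t^{-ξ_1},…,t^{-ξ_M},1,…,1)`. -/
def xiExt (M K : ℕ) (xi : Fin M → ℤ) : Fin (M + 1 + K) → ℤ := fun i =>
  if h : (i : ℕ) < M then -(xi ⟨i, h⟩) else 0

/-- The simple roots `α_1, …, α_{M+N-1}` (`N = M+1+K`, so `M+N-1 = 2M+K`) of `GL(M|N)`
with respect to the mixed Borel, as elements of the weight lattice `ℤ^M × ℤ^N` with basis
`δ_1,…,δ_M` (first factor) and `ε_1,…,ε_N` (second factor):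
`α_{2k-1} = -ε_k + δ_k`, `α_{2k} = -δ_k + ε_{k+1}` (`1 ≤ k ≤ M`), and
`α_{2M+j} = -ε_{M+j} + ε_{M+j+1}` (`1 ≤ j ≤ N-M-1`). -/
noncomputable def sroot (M K : ℕ) (i : Fin (2 * M + K)) :
    (Fin M → ℤ) × (Fin (M + 1 + K) → ℤ) :=
  if h : (i : ℕ) < 2 * M then
    if (i : ℕ) % 2 = 0 then
      (Pi.single ⟨(i : ℕ) / 2, by omega⟩ 1, Pi.single ⟨(i : ℕ) / 2, by omega⟩ (-1))
    else
      (Pi.single ⟨(i : ℕ) / 2, by omega⟩ (-1), Pi.single ⟨(i : ℕ) / 2 + 1, by omega⟩ 1)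
  else
    (0, Pi.single ⟨(i : ℕ) - 2 * M + M, by have := i.isLt; omega⟩ (-1)
        + Pi.single ⟨(i : ℕ) - 2 * M + M + 1, by have := i.isLt; omega⟩ 1)

/- The part `Y = g u₂ L C` of `B` to the right of `u₁ t^{-ξ}`, with `C'` moved to the same side,
satisfies `u₁ t^{-ξ} Y = D v t^{(η,η')}`, where `u₁`, `D` and `v` are unipotent. Hence the minor of
`Y` in columns `1, …, k` and rows `1, …, i` (and row `M + 1` if `k = i + 1`; rows `1, …, k` if
`i = M`) has valuation exactly the sum of the first `i` entries of `ξ` and the first `k` entries of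
`(η, η')`. For `k ∈ {i, i + 1}`, expand it along the integral matrices `g` and `C`, and use the
factorisation `L = t^λ D t^{(θ,θ')}`: its valuation is at least that of some minor of `L` in `i` of
the first `M` rows and `k - i` copies of row `M + 1`, which dominance of `(λ, θ)` bounds below by
the corresponding sum for `(λ, (θ, θ'))`. For `i = M ≤ k` the leading `k × k` blocks of `g`, `u₂`
and `L` multiply, so the bound only loses the minor of `C`, a unit for `k = N`. In the interleaved
basis `ε₁, δ₁, ε₂, δ₂, …` these sums are the sums of initial coordinates, and the simple roots are
the differences of consecutive basis vectors, so summation by parts gives the root order. -/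

section Minors

variable {k l m n p q R : Type*} [CommRing R]

theorem det_submatrix_mul_eq_sum [Fintype k] [DecidableEq k] [Fintype m] (X : Matrix l m R)
    (Y : Matrix m n R) (r : k → l) (c : k → n) :
    ((X * Y).submatrix r c).det =
      ∑ f : k → m, (∏ a, X (r a) (f a)) * (Y.submatrix f c).det := by
  classical
  have hrow : (X * Y).submatrix r c = fun a => ∑ j, X (r a) j • fun b => Y j (c b) := by
    ext a b
    simp [Matrix.mul_apply, Finset.sum_apply]
  change Matrix.detRowAlternating.toMultilinearMap ((X * Y).submatrix r c) = _
  rw [hrow, MultilinearMap.map_sum]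
  exact Finset.sum_congr rfl fun f _ => MultilinearMap.map_smul_univ _ _ _

theorem submatrix_mul_eq_mul_submatrix [Fintype k] [Fintype m]
    (X : Matrix l m R) (Y : Matrix m n R) (r : p → l) (c : q → n) {e : k → m}
    (he : Function.Injective e)
    (h : ∀ a b, ∀ j ∉ Set.range e, X (r a) j * Y j (c b) = 0) :
    (X * Y).submatrix r c = X.submatrix r e * Y.submatrix e c := by
  ext a b
  exact (Finset.sum_of_injOn e he.injOn (by simp) (fun j _ hj => h a b j (by simpa using hj))
    fun _ _ => rfl).symm

end Minors

section AddValuation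

variable {R Γ₀ : Type*} [CommRing R] [LinearOrderedAddCommMonoidWithTop Γ₀]
  (v : AddValuation R Γ₀)

theorem addValuation_prod {ι : Type*} (s : Finset ι) (f : ι → R) :
    v (∏ i ∈ s, f i) = ∑ i ∈ s, v (f i) := by
  classical
  induction s using Finset.induction_on with
  | empty => simp
  | insert a s ha ih => rw [Finset.prod_insert ha, Finset.sum_insert ha, v.map_mul, ih]

variable {k : Type*} [Fintype k] [DecidableEq k]

theorem addValuation_det_nonneg {A : Matrix k k R} (hA : ∀ i j, 0 ≤ v (A i j)) :
    0 ≤ v A.det := by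
  rw [Matrix.det_apply]
  refine v.map_le_sum fun σ _ => ?_
  have hprod : 0 ≤ v (∏ i, A (σ i) i) := by
    rw [addValuation_prod]
    exact Finset.sum_nonneg fun i _ => hA _ _
  rcases Int.units_eq_one_or (Equiv.Perm.sign σ) with hσ | hσ <;> simpa [hσ] using hprod

theorem addValuation_det_eq_zero_of_mul_eq_one {A B : Matrix k k R}
    (hA : ∀ i j, 0 ≤ v (A i j)) (hB : ∀ i j, 0 ≤ v (B i j)) (hAB : A * B = 1) :
    v A.det = 0 := by
  have hsum : v A.det + v B.det = 0 := by
    rw [← v.map_mul, ← Matrix.det_mul, hAB, Matrix.det_one, v.map_one]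
  exact ((add_eq_zero_iff_of_nonneg (addValuation_det_nonneg v hA)
    (addValuation_det_nonneg v hB)).1 hsum).1

variable {l m n : Type*} [Fintype m] {X : Matrix l m R} {Y : Matrix m n R} {r : k → l} {c : k → n}
  {γ : Γ₀}

theorem le_addValuation_det_submatrix_mul_of_left (hX : ∀ a j, 0 ≤ v (X a j))
    (hY : ∀ f : k → m, (∀ a, X (r a) (f a) ≠ 0) → γ ≤ v (Y.submatrix f c).det) :
    γ ≤ v ((X * Y).submatrix r c).det := by
  rw [det_submatrix_mul_eq_sum]
  refine v.map_le_sum fun f _ => ?_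
  by_cases hf : ∀ a, X (r a) (f a) ≠ 0
  · rw [v.map_mul, addValuation_prod]
    exact le_add_of_nonneg_of_le (Finset.sum_nonneg fun a _ => hX _ _) (hY f hf)
  · push Not at hf
    obtain ⟨a, ha⟩ := hf
    have hzero : ∏ a, X (r a) (f a) = 0 := Finset.prod_eq_zero (Finset.mem_univ a) ha
    rw [hzero, zero_mul, v.map_zero]
    exact le_top

theorem le_addValuation_det_submatrix_mul_of_right (hY : ∀ j b, 0 ≤ v (Y j b))
    (hX : ∀ f : k → m, γ ≤ v (X.submatrix r f).det) :
    γ ≤ v ((X * Y).submatrix r c).det := by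
  rw [← Matrix.det_transpose, Matrix.transpose_submatrix, Matrix.transpose_mul]
  refine le_addValuation_det_submatrix_mul_of_left v (fun b j => hY j b) fun f _ => ?_
  rw [← Matrix.transpose_submatrix, Matrix.det_transpose]
  exact hX f

end AddValuation

section PartialSum

variable {A : Type*} {m n : ℕ}

/-- The sum of the first `i` entries of a finite sequence; it is the sum of all entries once `i`
exceeds the length. Written with `if` to match the inequalities between `(λ, θ)` and `(ξ, η)`. -/
def partialSum [AddCommMonoid A] (w : Fin n → A) (i : ℕ) : A :=
  ∑ j : Fin n, if (j : ℕ) < i then w j else 0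

section AddCommMonoid

variable [AddCommMonoid A]

theorem partialSum_of_le (w : Fin n → A) {i : ℕ} (h : n ≤ i) : partialSum w i = ∑ j, w j :=
  Finset.sum_congr rfl fun j _ => if_pos (j.2.trans_le h)

theorem partialSum_add (w w' : Fin n → A) (i : ℕ) :
    partialSum (fun j => w j + w' j) i = partialSum w i + partialSum w' i := by
  simp only [partialSum, ← Finset.sum_add_distrib]
  exact Finset.sum_congr rfl fun j _ => by split_ifs <;> simp

theorem partialSum_append_of_le (y : Fin m → A) (y' : Fin n → A) {i : ℕ} (h : i ≤ m) :
    partialSum (Fin.append y y') i = partialSum y i := by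
  have hout (j : Fin n) : ¬ m + (j : ℕ) < i := by omega
  simp [partialSum, Fin.sum_univ_add, hout]

theorem partialSum_append_add (y : Fin m → A) (y' : Fin n → A) (i : ℕ) :
    partialSum (Fin.append y y') (m + i) = ∑ j, y j + partialSum y' i := by
  have hin (j : Fin m) : (j : ℕ) < m + i := by omega
  simp [partialSum, Fin.sum_univ_add, hin]

theorem partialSum_castSucc (y : Fin (n + 1) → A) {i : ℕ} (h : i ≤ n) :
    partialSum (fun j => y j.castSucc) i = partialSum y i := by
  simp [partialSum, Fin.sum_univ_castSucc, h.not_gt]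

theorem sum_comp_castLE (w : Fin n → A) (h : m ≤ n) :
    ∑ a, w (Fin.castLE h a) = partialSum w m := by
  refine Finset.sum_of_injOn (Fin.castLE h) (Fin.castLE_injective h).injOn (by simp) ?_ ?_
  · intro j _ hj
    rw [if_neg]
    exact fun hjm => hj ⟨⟨j, hjm⟩, by simp⟩
  · simp

theorem partialSum_succ (w : Fin n → A) (j : Fin n) :
    partialSum w (j + 1) = partialSum w j + w j := by
  rw [← sum_comp_castLE w j.2, ← sum_comp_castLE w j.2.le, Fin.sum_univ_castSucc]
  rfl

end AddCommMonoid

theorem partialSum_sub [AddCommGroup A] (w w' : Fin n → A) (i : ℕ) :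
    partialSum (w - w') i = partialSum w i - partialSum w' i := by
  rw [eq_sub_iff_add_eq, ← partialSum_add]
  simp

theorem castLE_le_of_strictMono {h : m ≤ n} {s : Fin m → Fin n} (hs : StrictMono s)
    (a : Fin m) : Fin.castLE h a ≤ s a := by
  have hcard : (Finset.Iio a).card ≤ (Finset.Iio (s a)).card :=
    Finset.card_le_card_of_injOn s (fun b hb => by simpa using hs (by simpa using hb))
      hs.injective.injOn
  simpa [Fin.le_def] using hcard

theorem partialSum_le_sum_of_injective [AddCommMonoid A] [PartialOrder A] [IsOrderedAddMonoid A]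
    {w : Fin n → A} (hw : Monotone w) {e : Fin m → Fin n} (he : Function.Injective e) :
    partialSum w m ≤ ∑ a, w (e a) := by
  have hmn : m ≤ n := by simpa using Fintype.card_le_of_injective e he
  have hs : StrictMono (e ∘ Tuple.sort e) :=
    (Tuple.monotone_sort e).strictMono_of_injective (he.comp (Tuple.sort e).injective)
  rw [← sum_comp_castLE w hmn, ← Equiv.sum_comp (Tuple.sort e) fun a => w (e a)]
  exact Finset.sum_le_sum fun a _ => hw (castLE_le_of_strictMono hs a)

end PartialSum

section Laurent

/-- The `t`-adic valuation on `ℂ((t))`, with value `⊤` at `0`. -/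
abbrev tval : AddValuation F (WithTop ℤ) := HahnSeries.addVal ℤ ℂ

theorem mem_Oint_iff {f : F} : f ∈ Oint ↔ 0 ≤ tval f := by
  rw [HahnSeries.addVal_apply, ← WithTop.coe_zero, HahnSeries.le_orderTop_iff_forall]
  simp [Oint]

theorem tpow_add (a b : ℤ) : tpow (a + b) = tpow a * tpow b :=
  zpow_add₀ (by simp) a b

theorem tpow_zero : tpow 0 = 1 := zpow_zero _

theorem tval_tpow (a : ℤ) : tval (tpow a) = a := by
  rw [tpow, ← RatFunc.single_zpow, HahnSeries.addVal_apply, HahnSeries.orderTop_single one_ne_zero]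

theorem tval_mul_apply_nonneg {l m n : Type*} [Fintype m] {A : Matrix l m F} {B : Matrix m n F}
    (hA : ∀ i j, 0 ≤ tval (A i j)) (hB : ∀ i j, 0 ≤ tval (B i j)) (i : l) (j : n) :
    0 ≤ tval ((A * B) i j) :=
  tval.map_le_sum fun _ _ => (tval.map_mul _ _).symm ▸ add_nonneg (hA _ _) (hB _ _)

end Laurent

namespace InGLO

variable {n : ℕ} {A B : Matrix (Fin n) (Fin n) F}

theorem tval_nonneg (hA : InGLO A) (i j : Fin n) : 0 ≤ tval (A i j) := by
  obtain ⟨_, hint, -⟩ := hA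
  exact mem_Oint_iff.1 (hint i j)

theorem exists_mul_eq_one (hA : InGLO A) : ∃ B, InGLO B ∧ A * B = 1 := by
  obtain ⟨B, hAint, hBint, hAB, hBA⟩ := hA
  exact ⟨B, ⟨A, hBint, hAint, hBA, hAB⟩, hAB⟩

theorem mul (hA : InGLO A) (hB : InGLO B) : InGLO (A * B) := by
  obtain ⟨A', hA', hA'A⟩ := hA.exists_mul_eq_one
  obtain ⟨B', hB', hB'B⟩ := hB.exists_mul_eq_one
  have hone : A * B * (B' * A') = 1 := by
    rw [Matrix.mul_assoc, ← Matrix.mul_assoc B, hB'B, Matrix.one_mul, hA'A]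
  refine ⟨B' * A', fun i j => mem_Oint_iff.2 ?_, fun i j => mem_Oint_iff.2 ?_, hone,
    mul_eq_one_comm.1 hone⟩
  · exact tval_mul_apply_nonneg hA.tval_nonneg hB.tval_nonneg i j
  · exact tval_mul_apply_nonneg hB'.tval_nonneg hA'.tval_nonneg i j

theorem tval_det (hA : InGLO A) : tval A.det = 0 := by
  obtain ⟨B, hB, hAB⟩ := hA.exists_mul_eq_one
  exact addValuation_det_eq_zero_of_mul_eq_one tval hA.tval_nonneg hB.tval_nonneg hAB

end InGLO

section Tdiag

variable {k n : ℕ} (w : Fin n → ℤ) (Y : Matrix (Fin n) (Fin n) F) (r c : Fin k → Fin n)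

theorem tval_det_tdiag : tval (tdiag w).det = ↑(∑ i, w i) := by
  rw [tdiag, Matrix.det_diagonal, addValuation_prod, WithTop.coe_sum]
  exact Finset.sum_congr rfl fun i _ => tval_tpow _

theorem tval_det_tdiag_mul_submatrix :
    tval ((tdiag w * Y).submatrix r c).det = ↑(∑ a, w (r a)) + tval (Y.submatrix r c).det := by
  have hsub : (tdiag w * Y).submatrix r c = tdiag (w ∘ r) * Y.submatrix r c := by
    ext a b
    simp [tdiag]
  rw [hsub, Matrix.det_mul, tval.map_mul, tval_det_tdiag]
  rfl

theorem tval_det_mul_tdiag_submatrix :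
    tval ((Y * tdiag w).submatrix r c).det = tval (Y.submatrix r c).det + ↑(∑ b, w (c b)) := by
  have hsub : (Y * tdiag w).submatrix r c = Y.submatrix r c * tdiag (w ∘ c) := by
    ext a b
    simp [tdiag]
  rw [hsub, Matrix.det_mul, tval.map_mul, tval_det_tdiag]
  rfl

end Tdiag

section Unipotent

variable {k n : ℕ} {X v : Matrix (Fin n) (Fin n) F} {r : Fin k → Fin n}

namespace UpUnip

theorem det_submatrix (hv : UpUnip v) (hr : StrictMono r) : (v.submatrix r r).det = 1 := by
  rw [Matrix.det_of_isUpperTriangular]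
  · simp [hv.1]
  · exact fun a b hab => hv.2 _ _ (hr hab)

theorem det_mul_submatrix_castLE (hv : UpUnip v) (hkn : k ≤ n) (X : Matrix (Fin n) (Fin n) F)
    (r : Fin k → Fin n) :
    ((X * v).submatrix r (Fin.castLE hkn)).det = (X.submatrix r (Fin.castLE hkn)).det := by
  rw [submatrix_mul_eq_mul_submatrix _ _ _ _ (Fin.castLE_injective hkn), Matrix.det_mul,
    hv.det_submatrix (Fin.strictMono_castLE hkn), mul_one]
  refine fun a b j hj => mul_eq_zero_of_right _ (hv.2 _ _ ?_)
  by_contra! hjb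
  exact hj ⟨⟨j, hjb.trans_lt b.2⟩, rfl⟩

end UpUnip

namespace LowUnip

theorem det_submatrix (hX : LowUnip X) (hr : StrictMono r) : (X.submatrix r r).det = 1 := by
  rw [Matrix.det_of_isLowerTriangular]
  · simp [hX.1]
  · exact fun a b hab => hX.2 _ _ (hr hab)

theorem det_mul_submatrix (hX : LowUnip X) (hr : StrictMono r)
    (hsupp : ∀ a, ∀ j ∉ Set.range r, X (r a) j = 0) (Y : Matrix (Fin n) (Fin n) F)
    (c : Fin k → Fin n) : ((X * Y).submatrix r c).det = (Y.submatrix r c).det := by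
  rw [submatrix_mul_eq_mul_submatrix X Y r c hr.injective fun a b j hj => by
      rw [hsupp a j hj, zero_mul], Matrix.det_mul, hX.det_submatrix hr, one_mul]

theorem det_mul_submatrix_castLE (hX : LowUnip X) (hkn : k ≤ n) (Y : Matrix (Fin n) (Fin n) F)
    (c : Fin k → Fin n) :
    ((X * Y).submatrix (Fin.castLE hkn) c).det = (Y.submatrix (Fin.castLE hkn) c).det := by
  refine hX.det_mul_submatrix (Fin.strictMono_castLE hkn) (fun a j hj => hX.2 _ _ ?_) Y c
  by_contra! hja
  exact hj ⟨⟨j, hja.trans_lt a.2⟩, rfl⟩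

end LowUnip

theorem InUminus.lowUnip {M : ℕ} (hX : InUminus M X) : LowUnip X :=
  ⟨hX.1, fun i j hij => hX.2 i j (Fin.ne_of_lt hij) (Or.inr hij.le)⟩

theorem InUminus.mul_apply {M : ℕ} (hX : InUminus M X) (Y : Matrix (Fin n) (Fin n) F) {i : Fin n}
    (hi : (i : ℕ) ≤ M) (j : Fin n) : (X * Y) i j = Y i j := by
  rw [Matrix.mul_apply, Finset.sum_eq_single i]
  · rw [hX.1, one_mul]
  · exact fun l _ hl => by rw [hX.2 i l hl.symm (Or.inl hi), zero_mul]
  · simp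

end Unipotent

section EmbTop

variable {M k n : ℕ} {g : Matrix (Fin M) (Fin M) F}

theorem lt_of_embTop_ne_zero {i j : Fin n} (hi : (i : ℕ) < M) (h : embTop M n g i j ≠ 0) :
    (j : ℕ) < M := by
  by_contra hj
  simp [embTop, hi, hj] at h

theorem eq_of_embTop_ne_zero {i j : Fin n} (hi : M ≤ (i : ℕ)) (h : embTop M n g i j ≠ 0) :
    i = j := by
  by_contra hij
  simp [embTop, hi.not_gt, Fin.val_inj, hij] at h

theorem tval_embTop_nonneg (hg : ∀ i j, 0 ≤ tval (g i j)) (i j : Fin n) :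
    0 ≤ tval (embTop M n g i j) := by
  unfold embTop
  split_ifs <;> simp only [hg, tval.map_zero, tval.map_one, le_top, le_refl]

theorem lowUnip_embTop (hg : LowUnip g) : LowUnip (embTop M n g) := by
  refine ⟨fun i => ?_, fun i j hij => ?_⟩
  · by_cases hi : (i : ℕ) < M <;> simp [embTop, hi, hg.1]
  · unfold embTop
    split_ifs with hi hj hij'
    exacts [hg.2 _ _ hij, rfl, absurd hij' hij.ne, rfl]

theorem embTop_submatrix_castLE (hkn : k ≤ n) :
    (embTop M n g).submatrix (Fin.castLE hkn) (Fin.castLE hkn) = embTop M k g := by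
  ext i j
  simp [embTop]

theorem det_embTop (h : M ≤ n) : (embTop M n g).det = g.det := by
  obtain ⟨d, rfl⟩ := Nat.exists_eq_add_of_le h
  have hblocks : (embTop M (M + d) g).submatrix finSumFinEquiv finSumFinEquiv =
      Matrix.fromBlocks g 0 0 1 := by
    have hne (i : Fin d) (j : Fin M) : M + (i : ℕ) ≠ j := by omega
    ext (i | i) (j | j) : 1 <;> simp [embTop, Matrix.one_apply, Fin.ext_iff, hne]
  rw [← Matrix.det_submatrix_equiv_self finSumFinEquiv, hblocks, Matrix.det_fromBlocks_zero₂₁,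
    Matrix.det_one, mul_one]

theorem det_embTop_mul_submatrix_castLE (hMk : M ≤ k) (hkn : k ≤ n)
    (Y : Matrix (Fin n) (Fin n) F) (c : Fin k → Fin n) :
    ((embTop M n g * Y).submatrix (Fin.castLE hkn) c).det =
      g.det * (Y.submatrix (Fin.castLE hkn) c).det := by
  rw [submatrix_mul_eq_mul_submatrix _ _ _ _ (Fin.castLE_injective hkn), Matrix.det_mul,
    embTop_submatrix_castLE, det_embTop hMk]
  intro a b j hj
  by_contra hne
  refine hj ⟨⟨j, ?_⟩, rfl⟩
  have hg := left_ne_zero_of_mul hne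
  rcases lt_or_ge (Fin.castLE hkn a : ℕ) M with ha | ha
  · exact (lt_of_embTop_ne_zero ha hg).trans_le hMk
  · exact eq_of_embTop_ne_zero ha hg ▸ a.2

end EmbTop

section Representatives

variable {M K : ℕ}

theorem fullSeq_eq_append (y : Fin (M + 1) → ℤ) (y' : Fin K → ℤ) :
    fullSeq M K y y' = Fin.append y y' := by
  ext i
  induction i using Fin.addCases with
  | left i => rw [Fin.append_left]; exact dif_pos i.2
  | right i =>
    rw [Fin.append_right]
    exact (dif_neg (Nat.le_add_right _ _).not_gt).trans (by simp)

theorem LmatN_eq (lam : Fin M → ℤ) (th : Fin (M + 1) → ℤ) (thp : Fin K → ℤ) :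
    LmatN M K lam th thp = tdiag (xiExt M K (-lam)) * Dmat M K * tdiag (fullSeq M K th thp) := by
  ext i j : 1
  rw [tdiag, tdiag, Matrix.mul_diagonal, Matrix.diagonal_mul]
  rcases lt_trichotomy (i : ℕ) M with hi | hi | hi
  · by_cases hij : i = j
    · subst hij
      simp [LmatN, Dmat, xiExt, fullSeq, hi, hi.ne, hi.trans M.lt_succ_self, tpow_add]
    · simp [LmatN, Dmat, hi, hi.ne, hij, Fin.val_inj]
  · by_cases hj : (j : ℕ) ≤ M
    · simp [LmatN, Dmat, xiExt, fullSeq, hi, hj, tpow_zero]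
    · simp [LmatN, Dmat, hi, hj]
  · by_cases hij : i = j
    · subst hij
      simp [LmatN, Dmat, xiExt, fullSeq, hi.ne', hi.not_gt, hi.not_ge, tpow_zero]
    · simp [LmatN, Dmat, hi.ne', hi.not_gt, hij, Fin.val_inj]

theorem lowUnip_Dmat : LowUnip (Dmat M K) := by
  refine ⟨fun i => ?_, fun i j hij => ?_⟩
  · by_cases hi : (i : ℕ) = M <;> simp [Dmat, hi]
  · by_cases hi : (i : ℕ) = M
    · simp [Dmat, hi, (hi ▸ hij).not_ge]
    · simp [Dmat, hi, Fin.ne_of_lt hij]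

theorem tval_Dmat_nonneg (i j : Fin (M + 1 + K)) : 0 ≤ tval (Dmat M K i j) := by
  unfold Dmat
  split_ifs <;> simp

theorem sum_xiExt {i k : ℕ} (hik : i ≤ k) (xi : Fin M → ℤ) (s : Fin k → Fin (M + 1 + K))
    (hlt : ∀ a : Fin k, (a : ℕ) < i → (s a : ℕ) < M)
    (hge : ∀ a : Fin k, i ≤ (a : ℕ) → M ≤ (s a : ℕ)) :
    ∑ a, xiExt M K xi (s a) = -∑ a : Fin i, xi ⟨s (Fin.castLE hik a), hlt _ a.2⟩ := by
  rw [← Finset.sum_neg_distrib]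
  symm
  refine Finset.sum_of_injOn (Fin.castLE hik) (Fin.castLE_injective hik).injOn (by simp) ?_ ?_
  · intro a _ ha
    have hia : i ≤ (a : ℕ) := by
      by_contra! hai
      exact ha ⟨⟨a, hai⟩, by simp⟩
    simp [xiExt, (hge a hia).not_gt]
  · intro a _
    have := hlt (Fin.castLE hik a) a.2
    simp [xiExt, this]

end Representatives

section MinorRow

variable {M K i k : ℕ}

/-- The rows of the minor, in the first `k` columns, whose valuation measures
`ξ₁ + ⋯ + ξᵢ + H₁ + ⋯ + Hₖ` (`H` the concatenation of `η` and `η'`): the rows `0, …, i - 1`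
followed by row `M` if `k = i + 1`, and the rows `0, …, k - 1` if `i = M`. Outside the cases
`i ≤ k ≤ i + 1` and `i = M ≤ k` the value is not meaningful. -/
def minorRow (M K i : ℕ) {k : ℕ} (hk : k ≤ M + 1 + K) (a : Fin k) : Fin (M + 1 + K) :=
  if (a : ℕ) < i then Fin.castLE hk a else max (Fin.castLE hk a) ⟨M, by omega⟩

theorem minorRow_of_lt {hk : k ≤ M + 1 + K} {a : Fin k} (ha : (a : ℕ) < i) :
    minorRow M K i hk a = Fin.castLE hk a := if_pos ha

theorem val_minorRow_of_le {hk : k ≤ M + 1 + K} {a : Fin k} (ha : i ≤ (a : ℕ)) :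
    (minorRow M K i hk a : ℕ) = max (a : ℕ) M := by
  rw [minorRow, if_neg ha.not_gt]
  exact Fin.coe_max _ _

theorem minorRow_self {hk : k ≤ M + 1 + K} : minorRow M K M hk = Fin.castLE hk := by
  ext a
  rcases lt_or_ge (a : ℕ) M with ha | ha
  · rw [minorRow_of_lt ha]
  · rw [val_minorRow_of_le ha, max_eq_left ha, Fin.val_castLE]

theorem minorRow_strictMono (hk : k ≤ M + 1 + K) (h : k ≤ i + 1 ∨ i = M) :
    StrictMono (minorRow M K i hk) := by
  rcases h with h | rfl
  · intro a b hab
    have ha : (a : ℕ) < i := by omega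
    rw [minorRow_of_lt ha]
    rcases lt_or_ge (b : ℕ) i with hb | hb
    · rwa [minorRow_of_lt hb]
    · rw [Fin.lt_def, val_minorRow_of_le hb]
      exact lt_max_of_lt_left hab
  · rw [minorRow_self]
    exact Fin.strictMono_castLE hk

theorem det_Dmat_submatrix_minorRow (hk : k ≤ M + 1 + K) (hi : i ≤ M) (h : k ≤ i + 1 ∨ i = M) :
    ((Dmat M K).submatrix (minorRow M K i hk) (Fin.castLE hk)).det = 1 := by
  rcases h with h | rfl
  · rw [Matrix.det_of_isLowerTriangular]
    · refine Finset.prod_eq_one fun a _ => ?_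
      rcases lt_or_ge (a : ℕ) i with ha | ha
      · rw [Matrix.submatrix_apply, minorRow_of_lt ha, lowUnip_Dmat.1]
      · have haM : (a : ℕ) ≤ M := by omega
        simp [Dmat, val_minorRow_of_le ha, haM]
    · intro a b hab
      have ha : (a : ℕ) < i := by
        have : (a : ℕ) < b := hab
        omega
      rw [Matrix.submatrix_apply, minorRow_of_lt ha]
      exact lowUnip_Dmat.2 _ _ hab
  · rw [minorRow_self]
    exact lowUnip_Dmat.det_submatrix (Fin.strictMono_castLE hk)

theorem embTop_minorRow_apply_eq_zero {u : Matrix (Fin M) (Fin M) F} (hu : LowUnip u)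
    (hk : k ≤ M + 1 + K) (a : Fin k) {j : Fin (M + 1 + K)}
    (hj : j ∉ Set.range (minorRow M K i hk)) :
    embTop M (M + 1 + K) u (minorRow M K i hk a) j = 0 := by
  by_contra hne
  rcases lt_or_ge (a : ℕ) i with ha | ha
  · have hja : (j : ℕ) ≤ a := by
      by_contra! haj
      exact hne ((lowUnip_embTop hu).2 _ _ (by rwa [minorRow_of_lt ha]))
    exact hj ⟨⟨j, hja.trans_lt a.2⟩, minorRow_of_lt (hja.trans_lt ha)⟩
  · refine hj ⟨a, eq_of_embTop_ne_zero ?_ hne⟩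
    rw [val_minorRow_of_le ha]
    exact le_max_right _ _

theorem sum_xiExt_minorRow (hk : k ≤ M + 1 + K) (hi : i ≤ M) (hik : i ≤ k) (xi : Fin M → ℤ) :
    ∑ a : Fin k, xiExt M K xi (minorRow M K i hk a) = -partialSum xi i := by
  rw [sum_xiExt hik, ← sum_comp_castLE xi hi]
  · refine congrArg Neg.neg (Finset.sum_congr rfl fun a _ => congrArg xi (Fin.ext ?_))
    simp [minorRow_of_lt]
  · intro a ha
    rw [minorRow_of_lt ha]
    exact ha.trans_le hi
  · intro a ha
    rw [val_minorRow_of_le ha]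
    exact le_max_right _ _

theorem tval_det_submatrix_minorRow {u : Matrix (Fin M) (Fin M) F}
    {Y v : Matrix (Fin (M + 1 + K)) (Fin (M + 1 + K)) F} {xi : Fin M → ℤ}
    {H : Fin (M + 1 + K) → ℤ} (hu : LowUnip u) (hv : UpUnip v)
    (hY : embTop M (M + 1 + K) u * (tdiag (xiExt M K xi) * Y) = Dmat M K * v * tdiag H)
    (hk : k ≤ M + 1 + K) (hi : i ≤ M) (hik : i ≤ k) (h : k ≤ i + 1 ∨ i = M) :
    tval (Y.submatrix (minorRow M K i hk) (Fin.castLE hk)).det =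
      ↑(partialSum xi i + partialSum H k) := by
  have hminor := congrArg
    (fun X => tval (X.submatrix (minorRow M K i hk) (Fin.castLE hk)).det) hY
  simp only [(lowUnip_embTop hu).det_mul_submatrix (minorRow_strictMono hk h)
      (fun a _ hj => embTop_minorRow_apply_eq_zero hu hk a hj), tval_det_tdiag_mul_submatrix,
    tval_det_mul_tdiag_submatrix, hv.det_mul_submatrix_castLE,
    det_Dmat_submatrix_minorRow hk hi h, tval.map_one, zero_add, sum_comp_castLE,
    sum_xiExt_minorRow hk hi hik] at hminor
  rw [WithTop.coe_add, ← hminor, ← add_assoc, ← WithTop.coe_add, add_neg_cancel,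
    WithTop.coe_zero, zero_add]

end MinorRow

section Estimates

variable {M K i k : ℕ}

theorem injective_of_det_submatrix_ne_zero {m n R κ : Type*} [CommRing R] [Fintype κ]
    [DecidableEq κ] {A : Matrix m n R} {s : κ → m} {f : κ → n} (h : (A.submatrix s f).det ≠ 0) :
    Function.Injective s ∧ Function.Injective f := by
  constructor <;> intro a b hab <;> by_contra hne
  · exact h (Matrix.det_zero_of_row_eq hne (by ext; simp [hab]))
  · exact h (Matrix.det_zero_of_column_eq hne (by simp [hab]))

theorem partialSum_le_sum_xiExt_neg {lam : Fin M → ℤ} (hlam : Monotone lam)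
    {s : Fin k → Fin (M + 1 + K)} (hs : Function.Injective s) (hik : i ≤ k)
    (hlt : ∀ a : Fin k, (a : ℕ) < i → (s a : ℕ) < M)
    (hge : ∀ a : Fin k, i ≤ (a : ℕ) → M ≤ (s a : ℕ)) :
    partialSum lam i ≤ ∑ a, xiExt M K (-lam) (s a) := by
  rw [sum_xiExt hik (-lam) s hlt hge]
  simp only [Pi.neg_apply, Finset.sum_neg_distrib, neg_neg]
  refine partialSum_le_sum_of_injective hlam fun a b hab => ?_
  exact Fin.castLE_injective hik (hs (Fin.ext (Fin.mk.inj hab)))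

theorem partialSum_fullSeq_le_sum {th : Fin (M + 1) → ℤ} (hth : Monotone th) (thp : Fin K → ℤ)
    {f : Fin k → Fin (M + 1 + K)} (hf : Function.Injective f) (hfM : ∀ b, (f b : ℕ) ≤ M) :
    partialSum (fullSeq M K th thp) k ≤ ∑ b, fullSeq M K th thp (f b) := by
  obtain ⟨e, rfl⟩ : ∃ e : Fin k → Fin (M + 1), f = Fin.castAdd K ∘ e :=
    ⟨fun b => ⟨f b, Nat.lt_succ_of_le (hfM b)⟩, rfl⟩
  have he : Function.Injective e := hf.of_comp
  have hk : k ≤ M + 1 := by simpa using Fintype.card_le_of_injective e he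
  simp only [fullSeq_eq_append, partialSum_append_of_le _ _ hk, Function.comp_apply,
    Fin.append_left]
  exact partialSum_le_sum_of_injective hth he

theorem le_tval_det_LmatN_submatrix {lam : Fin M → ℤ} {th : Fin (M + 1) → ℤ}
    (hlam : Monotone lam) (hth : Monotone th) (thp : Fin K → ℤ) (hik : i ≤ k)
    {s : Fin k → Fin (M + 1 + K)} (hlt : ∀ a : Fin k, (a : ℕ) < i → (s a : ℕ) < M)
    (hge : ∀ a : Fin k, i ≤ (a : ℕ) → (s a : ℕ) = M) (f : Fin k → Fin (M + 1 + K)) :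
    ↑(partialSum lam i + partialSum (fullSeq M K th thp) k) ≤
      tval ((LmatN M K lam th thp).submatrix s f).det := by
  rw [LmatN_eq, tval_det_mul_tdiag_submatrix, tval_det_tdiag_mul_submatrix]
  by_cases hdet : ((Dmat M K).submatrix s f).det = 0
  · simp [hdet]
  obtain ⟨hs, hf⟩ := injective_of_det_submatrix_ne_zero hdet
  have hfM (b : Fin k) : (f b : ℕ) ≤ M := by
    by_contra! hb
    refine hdet (Matrix.det_eq_zero_of_column_eq_zero b fun a => lowUnip_Dmat.2 _ _ ?_)
    rcases lt_or_ge (a : ℕ) i with ha | ha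
    · exact (hlt a ha).trans hb
    · rwa [hge a ha]
  rw [WithTop.coe_add]
  refine add_le_add (le_add_of_le_of_nonneg ?_ ?_) ?_
  · exact WithTop.coe_le_coe.2
      (partialSum_le_sum_xiExt_neg hlam hs hik hlt fun a ha => (hge a ha).ge)
  · exact addValuation_det_nonneg tval fun _ _ => tval_Dmat_nonneg _ _
  · exact WithTop.coe_le_coe.2 (partialSum_fullSeq_le_sum hth thp hf hfM)

variable {lam : Fin M → ℤ} {th : Fin (M + 1) → ℤ} {thp : Fin K → ℤ}
  {g : Matrix (Fin M) (Fin M) F} {u C : Matrix (Fin (M + 1 + K)) (Fin (M + 1 + K)) F}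

theorem le_tval_det_submatrix_minorRow (hlam : Monotone lam) (hth : Monotone th)
    (hg : ∀ a b, 0 ≤ tval (g a b)) (hu : InUminus M u) (hC : ∀ a b, 0 ≤ tval (C a b))
    (hi : i ≤ M) (hik : i ≤ k) (hki : k ≤ i + 1) (hk : k ≤ M + 1 + K) :
    ↑(partialSum lam i + partialSum (fullSeq M K th thp) k) ≤
      tval ((embTop M (M + 1 + K) g * (u * (LmatN M K lam th thp * C))).submatrix
        (minorRow M K i hk) (Fin.castLE hk)).det := by
  rw [← Matrix.mul_assoc u, ← Matrix.mul_assoc]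
  refine le_addValuation_det_submatrix_mul_of_right tval (fun _ _ => hC _ _) fun f => ?_
  refine le_addValuation_det_submatrix_mul_of_left tval (fun _ _ => tval_embTop_nonneg hg _ _)
    fun s hs => ?_
  have hlt (a : Fin k) (ha : (a : ℕ) < i) : (s a : ℕ) < M := by
    have hsa := hs a
    rw [minorRow_of_lt ha] at hsa
    exact lt_of_embTop_ne_zero (ha.trans_le hi) hsa
  have hge (a : Fin k) (ha : i ≤ (a : ℕ)) : (s a : ℕ) = M := by
    have hrow : (minorRow M K i hk a : ℕ) = M := by
      rw [val_minorRow_of_le ha]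
      omega
    have hsa : minorRow M K i hk a = s a := eq_of_embTop_ne_zero hrow.ge (hs a)
    rw [← hsa, hrow]
  have hL : (u * LmatN M K lam th thp).submatrix s f = (LmatN M K lam th thp).submatrix s f := by
    ext a b : 1
    refine hu.mul_apply _ ?_ _
    rcases lt_or_ge (a : ℕ) i with ha | ha
    · exact (hlt a ha).le
    · exact (hge a ha).le
  rw [hL]
  exact le_tval_det_LmatN_submatrix hlam hth thp hik hlt hge f

theorem tval_det_submatrix_castLE (hg : InGLO g) (hu : InUminus M u) (hMk : M ≤ k)
    (hk : k ≤ M + 1 + K) :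
    tval ((embTop M (M + 1 + K) g * (u * (LmatN M K lam th thp * C))).submatrix
        (Fin.castLE hk) (Fin.castLE hk)).det =
      ↑(partialSum lam M + partialSum (fullSeq M K th thp) k) +
        tval (C.submatrix (Fin.castLE hk) (Fin.castLE hk)).det := by
  have hlam : ∑ a, xiExt M K (-lam) (Fin.castLE hk a) = partialSum lam M := by
    rw [← minorRow_self, sum_xiExt_minorRow hk le_rfl hMk, neg_eq_iff_add_eq_zero, ← partialSum_add]
    simp [partialSum]
  rw [LmatN_eq, det_embTop_mul_submatrix_castLE hMk, hu.lowUnip.det_mul_submatrix_castLE,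
    Matrix.mul_assoc, Matrix.mul_assoc, tval.map_mul, hg.tval_det, zero_add,
    tval_det_tdiag_mul_submatrix, lowUnip_Dmat.det_mul_submatrix_castLE,
    tval_det_tdiag_mul_submatrix, hlam, sum_comp_castLE, ← add_assoc, WithTop.coe_add]

end Estimates

section Inequalities

variable {M K i k : ℕ} {lam xi : Fin M → ℤ} {th : Fin (M + 1) → ℤ} {thp : Fin K → ℤ}
  {H : Fin (M + 1 + K) → ℤ} {u₁ g : Matrix (Fin M) (Fin M) F}
  {u₂ v C : Matrix (Fin (M + 1 + K)) (Fin (M + 1 + K)) F}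

theorem partialSum_add_partialSum_le (hlam : Monotone lam) (hth : Monotone th) (hu₁ : LowUnip u₁)
    (hg : InGLO g) (hu₂ : InUminus M u₂) (hC : InGLO C) (hv : UpUnip v)
    (heq : embTop M (M + 1 + K) u₁ * (tdiag (xiExt M K xi) * (embTop M (M + 1 + K) g *
      (u₂ * (LmatN M K lam th thp * C)))) = Dmat M K * v * tdiag H)
    (hi : i ≤ M) (hik : i ≤ k) (hk : k ≤ M + 1 + K) (h : k ≤ i + 1 ∨ i = M) :
    partialSum lam i + partialSum (fullSeq M K th thp) k ≤ partialSum xi i + partialSum H k := by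
  rw [← WithTop.coe_le_coe, ← tval_det_submatrix_minorRow hu₁ hv heq hk hi hik h]
  rcases h with hki | rfl
  · exact le_tval_det_submatrix_minorRow hlam hth hg.tval_nonneg hu₂ hC.tval_nonneg hi hik hki hk
  · rw [minorRow_self, tval_det_submatrix_castLE hg hu₂ hik]
    exact le_add_of_nonneg_right (addValuation_det_nonneg tval fun _ _ => hC.tval_nonneg _ _)

theorem partialSum_add_partialSum_eq (hu₁ : LowUnip u₁) (hg : InGLO g) (hu₂ : InUminus M u₂)
    (hC : InGLO C) (hv : UpUnip v)
    (heq : embTop M (M + 1 + K) u₁ * (tdiag (xiExt M K xi) * (embTop M (M + 1 + K) g *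
      (u₂ * (LmatN M K lam th thp * C)))) = Dmat M K * v * tdiag H) :
    partialSum lam M + partialSum (fullSeq M K th thp) (M + 1 + K) =
      partialSum xi M + partialSum H (M + 1 + K) := by
  have hMN : M ≤ M + 1 + K := by omega
  rw [← WithTop.coe_inj, ← tval_det_submatrix_minorRow hu₁ hv heq le_rfl le_rfl hMN (Or.inr rfl),
    minorRow_self, tval_det_submatrix_castLE hg hu₂ hMN]
  exact (add_zero _).symm.trans (congrArg _ hC.tval_det.symm)

end Inequalities

section RootOrder

variable {M K : ℕ}

/-- The sum of the first `p` coordinates of a weight `w = (x, y)` of `GL(M|N)`, `N = M + 1 + K`, in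
the interleaved basis `ε₁, δ₁, ε₂, δ₂, …, ε_M, δ_M, ε_{M+1}, ε_{M+2}, …, ε_N`. In this order the
simple roots of the mixed Borel are the differences of consecutive basis vectors. -/
def mixedPrefix (M K : ℕ) (w : (Fin M → ℤ) × (Fin (M + 1 + K) → ℤ)) (p : ℕ) : ℤ :=
  partialSum w.1 (min (p / 2) M) + partialSum w.2 (p - min (p / 2) M)

theorem mixedPrefix_zero (w : (Fin M → ℤ) × (Fin (M + 1 + K) → ℤ)) : mixedPrefix M K w 0 = 0 := by
  simp [mixedPrefix, partialSum]

theorem mixedPrefix_sub (w w' : (Fin M → ℤ) × (Fin (M + 1 + K) → ℤ)) (p : ℕ) :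
    mixedPrefix M K (w - w') p = mixedPrefix M K w p - mixedPrefix M K w' p := by
  rw [mixedPrefix, Prod.fst_sub, Prod.snd_sub, partialSum_sub, partialSum_sub]
  exact sub_add_sub_comm _ _ _ _

theorem mixedPrefix_eq {w : (Fin M → ℤ) × (Fin (M + 1 + K) → ℤ)} {p i k : ℕ}
    (hi : min (p / 2) M = i) (hk : p = i + k) :
    mixedPrefix M K w p = partialSum w.1 i + partialSum w.2 k := by
  rw [mixedPrefix, hi, hk, Nat.add_sub_cancel_left]

theorem mixedPrefix_total (w : (Fin M → ℤ) × (Fin (M + 1 + K) → ℤ)) :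
    mixedPrefix M K w (2 * M + K + 1) = partialSum w.1 M + partialSum w.2 (M + 1 + K) :=
  mixedPrefix_eq (by omega) (by omega)

theorem mixedPrefix_succ_delta (w : (Fin M → ℤ) × (Fin (M + 1 + K) → ℤ)) (j : Fin M) :
    mixedPrefix M K w (2 * j + 2) = mixedPrefix M K w (2 * j + 1) + w.1 j := by
  rw [mixedPrefix_eq (i := j + 1) (k := j + 1) (by omega) (by omega),
    mixedPrefix_eq (p := 2 * j + 1) (i := j) (k := j + 1) (by omega) (by omega),
    partialSum_succ w.1]
  exact add_right_comm _ _ _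

theorem mixedPrefix_succ_epsilon (w : (Fin M → ℤ) × (Fin (M + 1 + K) → ℤ))
    (q : Fin (M + 1 + K)) :
    mixedPrefix M K w (q + min (q : ℕ) M + 1) = mixedPrefix M K w (q + min (q : ℕ) M) + w.2 q := by
  rw [mixedPrefix_eq (i := min (q : ℕ) M) (k := q + 1) (by omega) (by omega),
    mixedPrefix_eq (i := min (q : ℕ) M) (k := q) (by omega) (by omega), partialSum_succ w.2]
  exact (add_assoc _ _ _).symm

theorem sroot_fst_apply (p : Fin (2 * M + K)) (j : Fin M) :
    (sroot M K p).1 j =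
      (if (p : ℕ) + 1 = 2 * j + 1 then 1 else 0) - if (p : ℕ) = 2 * j + 1 then 1 else 0 := by
  unfold sroot
  split_ifs <;> simp [Pi.single_apply, Fin.ext_iff] <;> omega

theorem sroot_snd_apply (p : Fin (2 * M + K)) (q : Fin (M + 1 + K)) :
    (sroot M K p).2 q =
      (if (p : ℕ) + 1 = q + min (q : ℕ) M then 1 else 0) -
        if (p : ℕ) = q + min (q : ℕ) M then 1 else 0 := by
  unfold sroot
  split_ifs <;> simp [Pi.single_apply, Fin.ext_iff] <;> omega

theorem sum_mul_ite_sub_ite {A : Type*} [NonAssocRing A] {n P : ℕ} (f : ℕ → A) (h0 : f 0 = 0)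
    (hn : f (n + 1) = 0) (hP : P ≤ n) :
    ∑ p : Fin n, f (p + 1) *
      ((if (p : ℕ) + 1 = P then 1 else 0) - if (p : ℕ) = P then 1 else 0) = f P - f (P + 1) := by
  rw [Fin.sum_univ_eq_sum_range fun p => f (p + 1) *
    ((if p + 1 = P then 1 else 0) - if p = P then 1 else 0)]
  simp only [mul_sub, mul_ite, mul_one, mul_zero, Finset.sum_sub_distrib]
  congr 1
  · cases P with
    | zero => simp [h0]
    | succ P => simpa using fun h : n ≤ P => absurd hP h.not_gt
  · rcases hP.lt_or_eq with hlt | rfl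
    · simp [hlt]
    · simp [hn]

theorem exists_nat_smul_sroot {w : (Fin M → ℤ) × (Fin (M + 1 + K) → ℤ)}
    (htotal : mixedPrefix M K w (2 * M + K + 1) = 0)
    (hle : ∀ p ≤ 2 * M + K, mixedPrefix M K w p ≤ 0) :
    ∃ n : Fin (2 * M + K) → ℕ, w = ∑ p, (n p : ℤ) • sroot M K p := by
  refine ⟨fun p => (-mixedPrefix M K w (p + 1)).toNat, ?_⟩
  have hn (p : Fin (2 * M + K)) :
      ((-mixedPrefix M K w (p + 1)).toNat : ℤ) = -mixedPrefix M K w (p + 1) :=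
    Int.toNat_of_nonneg (neg_nonneg.2 (hle _ p.2))
  have htele {P : ℕ} (hP : P ≤ 2 * M + K) := sum_mul_ite_sub_ite
    (fun p => -mixedPrefix M K w p) (neg_eq_zero.2 (mixedPrefix_zero w)) (neg_eq_zero.2 htotal) hP
  ext j
  · simp only [hn, Prod.fst_sum, Prod.smul_fst, Finset.sum_apply, Pi.smul_apply, smul_eq_mul,
      sroot_fst_apply]
    rw [htele (by omega), mixedPrefix_succ_delta]
    ring
  · simp only [hn, Prod.snd_sum, Prod.smul_snd, Finset.sum_apply, Pi.smul_apply, smul_eq_mul,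
      sroot_snd_apply]
    rw [htele (by omega), mixedPrefix_succ_epsilon]
    ring

variable (x : Fin M → ℤ) (y : Fin (M + 1) → ℤ) (y' : Fin K → ℤ)

theorem mixedPrefix_even {i : ℕ} (hi : i ≤ M) :
    mixedPrefix M K (x, fullSeq M K y y') (2 * i) =
      ∑ j : Fin M, if (j : ℕ) < i then x j + y j.castSucc else 0 := by
  rw [mixedPrefix_eq (i := i) (k := i) (by omega) (by omega), fullSeq_eq_append,
    partialSum_append_of_le _ _ (by omega), ← partialSum_castSucc y hi, ← partialSum_add]
  rfl

theorem mixedPrefix_odd (i : Fin (M + 1)) :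
    mixedPrefix M K (x, fullSeq M K y y') (2 * i + 1) =
      (∑ j : Fin M, if (j : ℕ) < i then x j + y j.castSucc else 0) + y i := by
  rw [← mixedPrefix_even x y y' i.is_le, mixedPrefix_eq (i := i) (k := i + 1) (by omega) (by omega),
    mixedPrefix_eq (i := i) (k := i) (by omega) (by omega), fullSeq_eq_append,
    partialSum_append_of_le _ _ (by omega), partialSum_append_of_le _ _ (by omega),
    partialSum_succ y i]
  exact (add_assoc _ _ _).symm

theorem mixedPrefix_add_sum_tail (i : ℕ) :
    mixedPrefix M K (x, fullSeq M K y y') (2 * M + 1 + i) +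
        (∑ j : Fin K, if i ≤ (j : ℕ) then y' j else 0) =
      mixedPrefix M K (x, fullSeq M K y y') (2 * M + K + 1) := by
  have hsplit : partialSum y' i + (∑ j : Fin K, if i ≤ (j : ℕ) then y' j else 0) =
      partialSum y' K := by
    rw [partialSum_of_le y' le_rfl, partialSum, ← Finset.sum_add_distrib]
    refine Finset.sum_congr rfl fun j _ => ?_
    rcases lt_or_ge (j : ℕ) i with hj | hj
    · simp [hj, hj.not_ge]
    · simp [hj, hj.not_gt]
  rw [mixedPrefix_eq (i := M) (k := M + 1 + i) (by omega) (by omega),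
    mixedPrefix_total, fullSeq_eq_append,
    partialSum_append_add, partialSum_append_add, ← hsplit]
  simp only [add_assoc]

end RootOrder

/-- Suppose `B ∈ GL_N(F)` (`N = M+1+K`) lies both in
`U⁻_M(F) · t^{-ξ} · GL_M(O) · U⁻_{M,N}(F) · L_{(λ,(θ,θ'))} · GL_N(O)` and in
`D · U_N(F) · t^{(η,η')} · GL_N(O)`, with `(λ,θ)` dominant.  Then for every
`1 ≤ i ≤ N-M-1`: `η'_{N-M-i}+…+η'_{N-M-1} ≤ θ'_{N-M-i}+…+θ'_{N-M-1}`; for every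
`1 ≤ i ≤ M`: `(ξ_1+η_1)+…+(ξ_i+η_i) ≥ (λ_1+θ_1)+…+(λ_i+θ_i)`; and for every
`0 ≤ i ≤ M`: `(ξ_1+η_1)+…+(ξ_i+η_i)+η_{i+1} ≥ (λ_1+θ_1)+…+(λ_i+θ_i)+θ_{i+1}`.
Equivalently, `(λ,(θ,θ')) ≥ (ξ,(η,η'))` in the root order of `GL(M|N)`. -/
theorem stmt4 (M K : ℕ)
    (lam xi : Fin M → ℤ) (th eta : Fin (M + 1) → ℤ) (thp etap : Fin K → ℤ)
    (hlam : Monotone lam) (hth : Monotone th)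
    (B : Matrix (Fin (M + 1 + K)) (Fin (M + 1 + K)) F)
    (h1 : ∃ (u1 : Matrix (Fin M) (Fin M) F) (g : Matrix (Fin M) (Fin M) F)
        (u2 C : Matrix (Fin (M + 1 + K)) (Fin (M + 1 + K)) F),
        LowUnip u1 ∧ InGLO g ∧ InUminus M u2 ∧ InGLO C ∧
          B = embTop M (M + 1 + K) u1 * tdiag (xiExt M K xi) *
              embTop M (M + 1 + K) g * u2 * LmatN M K lam th thp * C)
    (h2 : ∃ (v C' : Matrix (Fin (M + 1 + K)) (Fin (M + 1 + K)) F),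
        UpUnip v ∧ InGLO C' ∧
          B = Dmat M K * v * tdiag (fullSeq M K eta etap) * C') :
    (∀ i : ℕ, 1 ≤ i → i ≤ K →
      (∑ j : Fin K, if K - i ≤ (j : ℕ) then etap j else 0)
        ≤ ∑ j : Fin K, if K - i ≤ (j : ℕ) then thp j else 0) ∧
    (∀ i : ℕ, 1 ≤ i → i ≤ M →
      (∑ j : Fin M, if (j : ℕ) < i then lam j + th j.castSucc else 0)
        ≤ ∑ j : Fin M, if (j : ℕ) < i then xi j + eta j.castSucc else 0) ∧
    (∀ i : Fin (M + 1),
      (∑ j : Fin M, if (j : ℕ) < (i : ℕ) then lam j + th j.castSucc else 0) + th i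
        ≤ (∑ j : Fin M, if (j : ℕ) < (i : ℕ) then xi j + eta j.castSucc else 0) + eta i) ∧
    (∃ n : Fin (2 * M + K) → ℕ,
      ((lam, fullSeq M K th thp) - (xi, fullSeq M K eta etap)
          : (Fin M → ℤ) × (Fin (M + 1 + K) → ℤ))
        = ∑ i, (n i : ℤ) • sroot M K i) := by
  obtain ⟨u₁, g, u₂, C, hu₁, hg, hu₂, hC, rfl⟩ := h1
  obtain ⟨v, C', hv, hC', hB⟩ := h2
  obtain ⟨C'', hC'', hinv⟩ := hC'.exists_mul_eq_one
  have heq : embTop M (M + 1 + K) u₁ * (tdiag (xiExt M K xi) * (embTop M (M + 1 + K) g *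
      (u₂ * (LmatN M K lam th thp * (C * C''))))) =
      Dmat M K * v * tdiag (fullSeq M K eta etap) := by
    simpa only [Matrix.mul_assoc, hinv, Matrix.mul_one] using congrArg (· * C'') hB
  have hle (p : ℕ) (hp : p ≤ 2 * M + K + 1) : mixedPrefix M K (lam, fullSeq M K th thp) p ≤
      mixedPrefix M K (xi, fullSeq M K eta etap) p :=
    partialSum_add_partialSum_le hlam hth hu₁ hg hu₂ (hC.mul hC'') hv heq (min_le_right _ _)
      (by omega) (by omega) (by omega)
  have htotal : mixedPrefix M K (lam, fullSeq M K th thp) (2 * M + K + 1) =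
      mixedPrefix M K (xi, fullSeq M K eta etap) (2 * M + K + 1) := by
    simpa only [mixedPrefix_total] using
      partialSum_add_partialSum_eq hu₁ hg hu₂ (hC.mul hC'') hv heq
  refine ⟨fun i _ _ => ?_, fun i _ hi => ?_, fun i => ?_, exists_nat_smul_sroot ?_ ?_⟩
  · linarith [hle (2 * M + 1 + (K - i)) (by omega), mixedPrefix_add_sum_tail lam th thp (K - i),
      mixedPrefix_add_sum_tail xi eta etap (K - i)]
  · simpa only [mixedPrefix_even _ _ _ hi] using hle (2 * i) (by omega)
  · simpa only [mixedPrefix_odd] using hle (2 * i + 1) (by omega)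
  · rw [mixedPrefix_sub, htotal, sub_self]
  · intro p hp
    rw [mixedPrefix_sub]
    exact sub_nonpos.2 (hle p (by omega))
end
end
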